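/- arXiv:1612.06618 — 2 statements merged into one kernel-verified Lean document; each statement's English description precedes it below -/
import Mathlib

section
/- Fix ν > 0. Then as λ → ∞, ln(Z(λ,ν)) = ν·λ^(1/ν) − ((ν−1)/(2ν))·ln(λ) − ln((2π)^((ν−1)/2)·√ν) + ((ν²−1)/(24ν))·λ^(−1/ν) + ((ν²−1)/(48ν²))·λ^(−2/ν) + O(λ^(−3/ν)). Precisely: there exist constants C > 0 and Λ > 0 (depending only on ν) such that for all λ ≥ Λ, |ln(Z(λ,ν)) − ν·λ^(1/ν) + ((ν−1)/(2ν))·ln(λ) + ln((2π)^((ν−1)/2)·√ν) − ((ν²−1)/(24ν))·λ^(−1/ν) − ((ν²−1)/(48ν²))·λ^(−2/ν)| ≤ C·λ^(−3/ν). -/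
open scoped BigOperators

/-- The Conway-Maxwell-Poisson normalizing constant `Z(λ,ν) = ∑_{i=0}^∞ λ^i/(i!)^ν`. -/
noncomputable def cmpZ (lam nu : ℝ) : ℝ := ∑' i : ℕ, lam ^ i / (i.factorial : ℝ) ^ nu

open Filter Topology Asymptotics

/-- weights -/
noncomputable def cw (ν x : ℝ) (i : ℕ) : ℝ := (x ^ ν) ^ i / (i.factorial : ℝ) ^ ν

/-- normalized deviation -/
noncomputable def cu (x : ℝ) (i : ℕ) : ℝ := ((i : ℝ) - x) / x

/-- expectation -/
noncomputable def cE (ν x : ℝ) (h : ℕ → ℝ) : ℝ := (∑' i, h i * cw ν x i) / cmpZ (x ^ ν) ν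

/-- moments -/
noncomputable def cm (ν x : ℝ) (k : ℕ) : ℝ := cE ν x (fun i => cu x i ^ k)

lemma summable_base (ν : ℝ) (hν : 0 < ν) (lam : ℝ) (hl : 0 < lam) :
    Summable (fun i : ℕ => lam ^ i / (i.factorial : ℝ) ^ ν) := by
  refine summable_of_ratio_test_tendsto_lt_one (l := 0) one_pos ?_ ?_
  · filter_upwards with i
    positivity
  · have h1 : Tendsto (fun i : ℕ => ((i : ℝ) + 1) ^ (-ν)) atTop (𝓝 0) :=
      (tendsto_rpow_neg_atTop hν).comp (tendsto_natCast_atTop_atTop.atTop_add tendsto_const_nhds)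
    have h2 := h1.const_mul lam
    rw [mul_zero] at h2
    refine h2.congr (fun i => ?_)
    have hf : (0:ℝ) < (i.factorial : ℝ) := by positivity
    have hi : (0:ℝ) < (i : ℝ) + 1 := by positivity
    rw [Real.norm_of_nonneg (by positivity), Real.norm_of_nonneg (by positivity),
      Nat.factorial_succ, Nat.cast_mul, Real.mul_rpow (by positivity) (by positivity),
      Real.rpow_neg hi.le]
    push_cast
    have : (0:ℝ) < (i.factorial : ℝ) ^ ν := by positivity
    have : (0:ℝ) < ((i : ℝ) + 1) ^ ν := by positivity
    field_simp
    ring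

lemma summable_pow_mul (ν : ℝ) (hν : 0 < ν) (lam : ℝ) (hl : 0 < lam) (N : ℕ) (h : ℕ → ℝ)
    (hh : h =O[atTop] fun i : ℕ => (i : ℝ) ^ N) :
    Summable (fun i : ℕ => h i * (lam ^ i / (i.factorial : ℝ) ^ ν)) := by
  have h1 : (fun i : ℕ => (i : ℝ) ^ N) =O[atTop] fun i : ℕ => (2 : ℝ) ^ i :=
    (isLittleO_pow_const_const_pow_of_one_lt N (by norm_num : (1:ℝ) < 2)).isBigO
  have h2 := (hh.trans h1).mul
    (isBigO_refl (fun i : ℕ => (lam ^ i / (i.factorial : ℝ) ^ ν)) atTop)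
  refine summable_of_isBigO_nat ?_ h2
  have := summable_base ν hν (2 * lam) (by positivity)
  refine this.congr (fun i => ?_)
  rw [mul_pow]; ring

lemma cw_pos (ν x : ℝ) (hx : 0 < x) (i : ℕ) : 0 < cw ν x i := by
  unfold cw; positivity

lemma cZ_eq (ν x : ℝ) : cmpZ (x ^ ν) ν = ∑' i, cw ν x i := rfl

lemma summable_cw (ν x : ℝ) (hν : 0 < ν) (hx : 0 < x) : Summable (cw ν x) :=
  summable_base ν hν _ (by positivity)

lemma cZ_pos (ν x : ℝ) (hν : 0 < ν) (hx : 0 < x) : 0 < cmpZ (x ^ ν) ν := by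
  rw [cZ_eq]
  exact (summable_cw ν x hν hx).tsum_pos (fun i => (cw_pos ν x hx i).le) 0 (cw_pos ν x hx 0)

lemma cu_isBigO (x a : ℝ) : (fun i : ℕ => cu x i + a) =O[atTop] fun i : ℕ => (i : ℝ) ^ 1 := by
  have h1 : (fun i : ℕ => (i : ℝ)) =O[atTop] fun i : ℕ => (i : ℝ) ^ 1 := by
    simpa using isBigO_refl _ _
  have h2 : (fun i : ℕ => (1 : ℝ)) =O[atTop] fun i : ℕ => (i : ℝ) ^ 1 := by
    refine IsBigO.of_bound 1 ?_
    filter_upwards [eventually_ge_atTop 1] with i hi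
    have : (1:ℝ) ≤ i := by exact_mod_cast hi
    simpa using this
  have := (h1.const_mul_left x⁻¹).add (h2.const_mul_left (a - x / x))
  refine this.congr_left (fun i => ?_)
  unfold cu; ring

lemma summable_cu_pow (ν x : ℝ) (hν : 0 < ν) (hx : 0 < x) (a b : ℝ) (k l : ℕ) :
    Summable (fun i => ((cu x i + a) ^ k * (cu x i + b) ^ l) * cw ν x i) := by
  refine summable_pow_mul ν hν (x ^ ν) (by positivity) (k + l) _ ?_
  have := ((cu_isBigO x a).pow k).mul ((cu_isBigO x b).pow l)
  refine this.congr_right (fun i => ?_)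
  rw [pow_one, pow_add]

lemma summable_cu (ν x : ℝ) (hν : 0 < ν) (hx : 0 < x) (k : ℕ) :
    Summable (fun i => cu x i ^ k * cw ν x i) := by
  simpa using summable_cu_pow ν x hν hx 0 0 k 0

lemma one_add_cu (x : ℝ) (hx : 0 < x) (i : ℕ) : 1 + cu x i = i / x := by
  unfold cu; field_simp; ring

lemma cu_ge (x : ℝ) (hx : 0 < x) (i : ℕ) : -1 ≤ cu x i := by
  have := one_add_cu x hx i
  have h2 : (0:ℝ) ≤ i / x := by positivity
  linarith

lemma cu_succ (x : ℝ) (hx : 0 < x) (i : ℕ) : cu x (i + 1) = cu x i + x⁻¹ := by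
  unfold cu; push_cast; field_simp; ring

lemma cw_succ (ν x : ℝ) (hx : 0 < x) (i : ℕ) :
    (1 + cu x (i + 1)) ^ ν * cw ν x (i + 1) = cw ν x i := by
  rw [one_add_cu x hx]
  unfold cw
  rw [Real.div_rpow (by positivity) hx.le, Nat.factorial_succ, Nat.cast_mul,
    Real.mul_rpow (by positivity) (by positivity), pow_succ]
  have : (0:ℝ) < (i.factorial : ℝ) ^ ν := by positivity
  have : (0:ℝ) < (((i + 1 : ℕ)) : ℝ) ^ ν := by positivity
  have : (0:ℝ) < x ^ ν := by positivity
  field_simp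

lemma stein (ν x : ℝ) (hν : 0 < ν) (hx : 0 < x) (g : ℝ → ℝ)
    (hs : Summable (fun i => g (cu x i + x⁻¹) * cw ν x i)) :
    Summable (fun i => (1 + cu x i) ^ ν * g (cu x i) * cw ν x i) ∧
    ∑' i, (1 + cu x i) ^ ν * g (cu x i) * cw ν x i = ∑' i, g (cu x i + x⁻¹) * cw ν x i := by
  have hshift : ∀ i, (1 + cu x (i + 1)) ^ ν * g (cu x (i + 1)) * cw ν x (i + 1)
      = g (cu x i + x⁻¹) * cw ν x i := by
    intro i
    rw [← cw_succ ν x hx i, ← cu_succ x hx i]; ring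
  have hS : Summable (fun i => (1 + cu x i) ^ ν * g (cu x i) * cw ν x i) := by
    rw [← summable_nat_add_iff 1]
    exact hs.congr (fun i => (hshift i).symm)
  refine ⟨hS, ?_⟩
  rw [hS.tsum_eq_zero_add]
  have h0 : (1 + cu x 0) ^ ν = 0 := by
    rw [one_add_cu x hx]; simp [Real.zero_rpow hν.ne']
  rw [h0]
  simp only [zero_mul, zero_add]
  exact tsum_congr hshift

lemma ptw_lower (ν : ℝ) (hν : 0 < ν) (u : ℝ) (hu : -1 ≤ u) (k : ℕ) :
    min 1 ν * u ^ (2 * k + 2) ≤ ((1 + u) ^ ν - 1) * (u ^ (2 * k + 1) * (2 + u)) := by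
  have hc : 0 < min 1 ν := lt_min one_pos hν
  have key : min 1 ν * u ^ 2 ≤ ((1 + u) ^ ν - 1) * (u * (2 + u)) := by
    rcases le_total 0 u with h | h
    · have hy : 0 < 1 + u := by linarith
      have h1 : 1 + ν * Real.log (1 + u) ≤ (1 + u) ^ ν := by
        rw [Real.rpow_def_of_pos hy]
        have := Real.add_one_le_exp (Real.log (1 + u) * ν)
        linarith
      have h2 : 1 - (1 + u)⁻¹ ≤ Real.log (1 + u) := Real.one_sub_inv_le_log_of_pos hy
      have h3 : u / (1 + u) ≤ Real.log (1 + u) := by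
        have : u / (1 + u) = 1 - (1 + u)⁻¹ := by field_simp; ring
        rw [this]; exact h2
      have h4 : ν * (u / (1 + u)) ≤ (1 + u) ^ ν - 1 := by
        have := mul_le_mul_of_nonneg_left h3 hν.le
        linarith
      have h5 : ν * (u / (1 + u)) * (u * (2 + u)) ≤ ((1 + u) ^ ν - 1) * (u * (2 + u)) :=
        mul_le_mul_of_nonneg_right h4 (by positivity)
      refine le_trans ?_ h5
      have h6 : u ^ 2 ≤ u / (1 + u) * (u * (2 + u)) := by
        rw [div_mul_eq_mul_div, le_div_iff₀ hy]
        nlinarith [sq_nonneg u]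
      calc min 1 ν * u ^ 2 ≤ ν * u ^ 2 :=
            mul_le_mul_of_nonneg_right (min_le_right _ _) (sq_nonneg u)
        _ ≤ ν * (u / (1 + u) * (u * (2 + u))) := mul_le_mul_of_nonneg_left h6 hν.le
        _ = _ := by ring
    · have h1 : (1 + u) ^ ν ≤ 1 + min 1 ν * u := by
        rcases le_total 1 ν with h1 | h1
        · rw [min_eq_left h1]
          have := Real.rpow_le_rpow_of_exponent_ge' (x := 1 + u) (by linarith) (by linarith)
            zero_le_one h1
          rw [Real.rpow_one] at this
          linarith
        · rw [min_eq_right h1]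
          exact rpow_one_add_le_one_add_mul_self hu hν.le h1
      have h2 : 0 ≤ (-u) * (2 + u) := mul_nonneg (by linarith) (by linarith)
      have h3 := mul_le_mul_of_nonneg_right h1 h2
      have h4 : 0 ≤ min 1 ν * (u ^ 2 * (1 + u)) :=
        mul_nonneg hc.le (mul_nonneg (sq_nonneg u) (by linarith))
      nlinarith
  have h7 : 0 ≤ u ^ (2 * k) := by rw [pow_mul]; positivity
  calc min 1 ν * u ^ (2 * k + 2) = min 1 ν * u ^ 2 * u ^ (2 * k) := by ring
    _ ≤ ((1 + u) ^ ν - 1) * (u * (2 + u)) * u ^ (2 * k) := mul_le_mul_of_nonneg_right key h7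
    _ = _ := by ring

lemma young_aux (K δ : ℝ) (hK : 0 < K) (hδ : 0 < δ) (k : ℕ) (ε s : ℝ) (hε : 0 < ε) :
    K * ε * s ^ (2 * k) ≤ δ * s ^ (2 * k + 2) + K * (K / δ) ^ k * ε ^ (k + 1) := by
  have h7 : 0 ≤ s ^ (2 * k) := by rw [pow_mul]; positivity
  have h8 : 0 ≤ s ^ (2 * k + 2) := by rw [show 2 * k + 2 = 2 * (k + 1) by ring, pow_mul]; positivity
  rcases le_total (K * ε) (δ * s ^ 2) with h | h
  · have : K * ε * s ^ (2 * k) ≤ δ * s ^ 2 * s ^ (2 * k) := mul_le_mul_of_nonneg_right h h7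
    have h9 : 0 ≤ K * (K / δ) ^ k * ε ^ (k + 1) := by positivity
    calc _ ≤ _ := this
      _ = δ * s ^ (2 * k + 2) := by ring
      _ ≤ _ := by linarith
  · have h1 : s ^ 2 ≤ K / δ * ε := by
      rw [div_mul_eq_mul_div, le_div_iff₀ hδ]; linarith
    have h2 : (s ^ 2) ^ k ≤ (K / δ * ε) ^ k := pow_le_pow_left₀ (sq_nonneg s) h1 k
    have h3 : K * ε * (s ^ 2) ^ k ≤ K * ε * (K / δ * ε) ^ k :=
      mul_le_mul_of_nonneg_left h2 (by positivity)
    calc K * ε * s ^ (2 * k) = K * ε * (s ^ 2) ^ k := by rw [pow_mul]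
      _ ≤ _ := h3
      _ = K * (K / δ) ^ k * ε ^ (k + 1) := by rw [mul_pow]; ring
      _ ≤ _ := by
        have := mul_nonneg hδ.le h8
        linarith

lemma ptw_upper (c : ℝ) (hc : 0 < c) (k : ℕ) : ∃ C > 0, ∃ ε₀ > 0, ∀ ε, 0 < ε → ε ≤ ε₀ → ∀ u : ℝ,
    (u + ε) ^ (2 * k + 1) * (2 + (u + ε)) - u ^ (2 * k + 1) * (2 + u)
      ≤ c / 2 * u ^ (2 * k + 2) + C * ε ^ (k + 1) := by
  set K : ℝ := 2 * (2 * k + 1) + (2 * k + 2) with hKdef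
  have hK : 0 < K := by positivity
  set δ : ℝ := c / (4 * 2 ^ (2 * k + 1)) with hδdef
  have hδ : 0 < δ := by positivity
  refine ⟨c / 2 + K * (K / δ) ^ k, by positivity, min 1 (δ / K), lt_min one_pos (by positivity),
    fun ε hε hle u => ?_⟩
  have hε1 : ε ≤ 1 := hle.trans (min_le_left _ _)
  have hε2 : K * ε ≤ δ := by
    have := hle.trans (min_le_right _ _)
    rw [le_div_iff₀ hK] at this; linarith
  set s : ℝ := |u| + ε with hs
  have hs0 : 0 ≤ s := by positivity
  have hus : |u| ≤ s := by linarith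
  have hues : |u + ε| ≤ s := by
    refine (abs_add_le _ _).trans ?_
    rw [abs_of_pos hε]
  have h1 : |(u + ε) ^ (2 * k + 1) - u ^ (2 * k + 1)| ≤ ε * (2 * k + 1) * s ^ (2 * k) := by
    have := abs_pow_sub_pow_le (u + ε) u (2 * k + 1)
    refine this.trans ?_
    rw [add_sub_cancel_left, abs_of_pos hε]
    push_cast
    have h2 : max |u + ε| |u| ≤ s := max_le hues hus
    have h3 : (max |u + ε| |u|) ^ (2 * k + 1 - 1) ≤ s ^ (2 * k) := by
      simpa using pow_le_pow_left₀ (le_max_of_le_left (abs_nonneg _)) h2 (2 * k)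
    exact mul_le_mul_of_nonneg_left h3 (by positivity)
  have h2 : (u + ε) ^ (2 * k + 1) * (2 + (u + ε)) - u ^ (2 * k + 1) * (2 + u)
      ≤ ε * (2 * k + 1) * s ^ (2 * k) * (2 + s) + s ^ (2 * k + 1) * ε := by
    have e1 : (u + ε) ^ (2 * k + 1) * (2 + (u + ε)) - u ^ (2 * k + 1) * (2 + u)
      = ((u + ε) ^ (2 * k + 1) - u ^ (2 * k + 1)) * (2 + u) + (u + ε) ^ (2 * k + 1) * ε := by ring
    rw [e1]
    refine add_le_add ?_ ?_
    · refine (le_abs_self _).trans ?_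
      rw [abs_mul]
      refine mul_le_mul h1 ?_ (abs_nonneg _) (by positivity)
      refine (abs_add_le _ _).trans ?_
      rw [abs_two]; linarith
    · refine mul_le_mul_of_nonneg_right ?_ hε.le
      refine (le_abs_self _).trans ?_
      rw [abs_pow]
      exact pow_le_pow_left₀ (abs_nonneg _) hues _
  have h3 : s ^ (2 * k + 1) ≤ s ^ (2 * k) + s ^ (2 * k + 2) := by
    have : s ≤ 1 + s ^ 2 := by nlinarith [sq_nonneg (s - 1)]
    calc s ^ (2 * k + 1) = s ^ (2 * k) * s := by ring
      _ ≤ s ^ (2 * k) * (1 + s ^ 2) := mul_le_mul_of_nonneg_left this (by positivity)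
      _ = _ := by ring
  have h4 : ε * (2 * k + 1) * s ^ (2 * k) * (2 + s) + s ^ (2 * k + 1) * ε
      ≤ K * ε * s ^ (2 * k) + K * ε * s ^ (2 * k + 2) := by
    have e : ε * (2 * k + 1) * s ^ (2 * k) * (2 + s) + s ^ (2 * k + 1) * ε
      = ε * (2 * (2 * k + 1)) * s ^ (2 * k) + ε * (2 * k + 2) * s ^ (2 * k + 1) := by ring
    rw [e]
    have h5 := mul_le_mul_of_nonneg_left h3 (by positivity : 0 ≤ ε * (2 * k + 2))
    have h6 : 0 ≤ ε * (2 * (2 * k + 1)) * s ^ (2 * k + 2) := by positivity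
    rw [hKdef]
    nlinarith
  have h5 := young_aux K δ hK hδ k ε s hε
  have h6 : s ^ (2 * k + 2) ≤ 2 ^ (2 * k + 1) * (u ^ (2 * k + 2) + ε ^ (2 * k + 2)) := by
    have := add_pow_le (abs_nonneg u) hε.le (2 * k + 2)
    have ev : |u| ^ (2 * k + 2) = u ^ (2 * k + 2) := (Even.pow_abs ⟨k + 1, by ring⟩ u)
    rw [ev] at this
    exact this
  have h7 : ε ^ (2 * k + 2) ≤ ε ^ (k + 1) := pow_le_pow_of_le_one hε.le hε1 (by omega)
  have h8 : K * ε * s ^ (2 * k + 2) ≤ δ * s ^ (2 * k + 2) :=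
    mul_le_mul_of_nonneg_right hε2 (by positivity)
  have h9 : 2 * δ * s ^ (2 * k + 2) ≤ c / 2 * (u ^ (2 * k + 2) + ε ^ (2 * k + 2)) := by
    have := mul_le_mul_of_nonneg_left h6 (by positivity : 0 ≤ 2 * δ)
    refine this.trans (le_of_eq ?_)
    rw [hδdef]; field_simp; ring
  have h10 : c / 2 * ε ^ (2 * k + 2) ≤ c / 2 * ε ^ (k + 1) :=
    mul_le_mul_of_nonneg_left h7 (by positivity)
  linarith

lemma cE_mono (ν x : ℝ) (hν : 0 < ν) (hx : 0 < x) (f g : ℕ → ℝ)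
    (hf : Summable (fun i => f i * cw ν x i)) (hg : Summable (fun i => g i * cw ν x i))
    (h : ∀ i, f i ≤ g i) : cE ν x f ≤ cE ν x g := by
  unfold cE
  refine div_le_div_of_nonneg_right ?_ (cZ_pos ν x hν hx).le
  exact hf.tsum_le_tsum (fun i => mul_le_mul_of_nonneg_right (h i) (cw_pos ν x hx i).le) hg

lemma cm_zero (ν x : ℝ) (hν : 0 < ν) (hx : 0 < x) : cm ν x 0 = 1 := by
  unfold cm cE
  simp only [pow_zero, one_mul]
  rw [← cZ_eq]
  exact div_self (cZ_pos ν x hν hx).ne'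

lemma even_moment_aux (ν : ℝ) (hν : 0 < ν) (k : ℕ) : ∃ C > 0, ∃ X > 0, ∀ x, X ≤ x →
    cm ν x (2 * k + 2) ≤ C * (x⁻¹) ^ (k + 1) := by
  set c := min 1 ν with hcdef
  have hc : 0 < c := lt_min one_pos hν
  obtain ⟨C, hC, ε₀, hε₀, H⟩ := ptw_upper c hc k
  refine ⟨2 * C / c, by positivity, ε₀⁻¹, by positivity, fun x hX => ?_⟩
  have hx : 0 < x := lt_of_lt_of_le (by positivity) hX
  have hε : 0 < x⁻¹ := by positivity
  have hle : x⁻¹ ≤ ε₀ := inv_le_of_inv_le₀ hε₀ hX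
  have hZ := cZ_pos ν x hν hx
  let g : ℝ → ℝ := fun u => u ^ (2 * k + 1) * (2 + u)
  have hs1 : Summable (fun i => g (cu x i + x⁻¹) * cw ν x i) := by
    refine (summable_cu_pow ν x hν hx x⁻¹ (2 + x⁻¹) (2 * k + 1) 1).congr (fun i => ?_)
    simp only [g]; ring
  have hs0 : Summable (fun i => g (cu x i) * cw ν x i) := by
    refine (summable_cu_pow ν x hν hx 0 2 (2 * k + 1) 1).congr (fun i => ?_)
    simp only [g]; ring
  obtain ⟨hs2, he⟩ := stein ν x hν hx g hs1
  have hsm := summable_cu ν x hν hx (2 * k + 2)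
  have hS0 := summable_cw ν x hν hx
  have hA : c * ∑' i, cu x i ^ (2 * k + 2) * cw ν x i ≤
      ∑' i, (1 + cu x i) ^ ν * g (cu x i) * cw ν x i - ∑' i, g (cu x i) * cw ν x i := by
    rw [← hs2.tsum_sub hs0, ← tsum_mul_left]
    refine (hsm.mul_left c).tsum_le_tsum (fun i => ?_) (hs2.sub hs0)
    have := mul_le_mul_of_nonneg_right (ptw_lower ν hν (cu x i) (cu_ge x hx i) k) (cw_pos ν x hx i).le
    simp only [g]
    linarith
  have hB : ∑' i, g (cu x i + x⁻¹) * cw ν x i - ∑' i, g (cu x i) * cw ν x i ≤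
      c / 2 * ∑' i, cu x i ^ (2 * k + 2) * cw ν x i + C * (x⁻¹) ^ (k + 1) * cmpZ (x ^ ν) ν := by
    rw [cZ_eq, ← hs1.tsum_sub hs0, ← tsum_mul_left, ← tsum_mul_left,
      ← (hsm.mul_left _).tsum_add (hS0.mul_left _)]
    refine (hs1.sub hs0).tsum_le_tsum (fun i => ?_) ((hsm.mul_left _).add (hS0.mul_left _))
    have := mul_le_mul_of_nonneg_right (H x⁻¹ hε hle (cu x i)) (cw_pos ν x hx i).le
    simp only [g]
    linarith
  unfold cm cE
  rw [div_le_iff₀ hZ, div_mul_eq_mul_div, div_mul_eq_mul_div, le_div_iff₀ hc]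
  rw [he] at hA
  linarith

/-- big-O of `x^{-n}` at infinity -/
def BO (n : ℕ) (f : ℝ → ℝ) : Prop := f =O[atTop] fun x : ℝ => (x⁻¹) ^ n

lemma even_moment_nonneg (ν x : ℝ) (hν : 0 < ν) (hx : 0 < x) (n : ℕ) : 0 ≤ cm ν x (2 * n) := by
  unfold cm cE
  refine div_nonneg (tsum_nonneg (fun i => mul_nonneg ?_ (cw_pos ν x hx i).le)) (cZ_pos ν x hν hx).le
  change 0 ≤ cu x i ^ (2 * n)
  rw [pow_mul]; positivity

lemma even_moment (ν : ℝ) (hν : 0 < ν) (n : ℕ) : BO n (fun x => cm ν x (2 * n)) := by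
  rcases n with _ | k
  · refine IsBigO.of_bound 1 ?_
    filter_upwards [eventually_gt_atTop 0] with x hx
    simp [cm_zero ν x hν hx]
  · obtain ⟨C, hC, X, hX, H⟩ := even_moment_aux ν hν k
    refine IsBigO.of_bound C ?_
    filter_upwards [eventually_ge_atTop X] with x hx
    have hx0 : 0 < x := hX.trans_le hx
    rw [Real.norm_of_nonneg (even_moment_nonneg ν x hν hx0 _), Real.norm_of_nonneg (by positivity)]
    exact H x hx

lemma BO.mono {n m : ℕ} {f : ℝ → ℝ} (h : BO n f) (hm : m ≤ n) : BO m f := by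
  refine IsBigO.trans h (IsBigO.of_bound 1 ?_)
  filter_upwards [eventually_ge_atTop 1] with x hx
  have hx0 : 0 < x := by linarith
  rw [Real.norm_of_nonneg (by positivity), Real.norm_of_nonneg (by positivity), one_mul]
  exact pow_le_pow_of_le_one (by positivity) (inv_le_one_of_one_le₀ hx) hm

lemma abs_moment_le (ν x : ℝ) (hν : 0 < ν) (hx : 0 < x) (n : ℕ) :
    |cm ν x (2 * n + 1)| ≤ cm ν x (2 * n) + cm ν x (2 * (n + 1)) := by
  have key : ∀ u : ℝ, |u ^ (2 * n + 1)| ≤ u ^ (2 * n) + u ^ (2 * (n + 1)) := by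
    intro u
    have h1 : |u| ≤ 1 + u ^ 2 := by
      rw [← sq_abs]; nlinarith [sq_nonneg (|u| - 1), abs_nonneg u]
    have h0 : 0 ≤ u ^ (2 * n) := by rw [pow_mul]; positivity
    calc |u ^ (2 * n + 1)| = u ^ (2 * n) * |u| := by rw [pow_succ, abs_mul, abs_of_nonneg h0]
      _ ≤ u ^ (2 * n) * (1 + u ^ 2) := mul_le_mul_of_nonneg_left h1 h0
      _ = _ := by ring
  have s1 := summable_cu ν x hν hx (2 * n + 1)
  have s2 := summable_cu ν x hν hx (2 * n)
  have s3 := summable_cu ν x hν hx (2 * (n + 1))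
  have hZ := cZ_pos ν x hν hx
  unfold cm cE
  rw [abs_div, abs_of_pos hZ, ← add_div, ← s2.tsum_add s3]
  refine div_le_div_of_nonneg_right ?_ hZ.le
  rw [abs_le]
  constructor
  · rw [← tsum_neg]
    refine (s2.add s3).neg.tsum_le_tsum (fun i => ?_) s1
    have := mul_le_mul_of_nonneg_right (neg_le_of_abs_le (key (cu x i))) (cw_pos ν x hx i).le
    linarith
  · refine s1.tsum_le_tsum (fun i => ?_) (s2.add s3)
    have := mul_le_mul_of_nonneg_right (le_of_abs_le (key (cu x i))) (cw_pos ν x hx i).le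
    linarith

lemma odd_moment (ν : ℝ) (hν : 0 < ν) (n : ℕ) : BO n (fun x => cm ν x (2 * n + 1)) := by
  have h := IsBigO.add (even_moment ν hν n) ((even_moment ν hν (n + 1)).mono (Nat.le_succ n))
  refine IsBigO.trans (IsBigO.of_bound 1 ?_) h
  filter_upwards [eventually_gt_atTop 0] with x hx
  rw [one_mul]
  exact (abs_moment_le ν x hν hx n).trans (le_abs_self _)

lemma BO_moment (ν : ℝ) (hν : 0 < ν) (n k : ℕ) (h : 2 * n ≤ k) : BO n (fun x => cm ν x k) := by
  rcases Nat.even_or_odd' k with ⟨j, rfl | rfl⟩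
  · exact (even_moment ν hν j).mono (by omega)
  · exact (odd_moment ν hν j).mono (by omega)

lemma partial_eq (ν u : ℝ) : (binomialSeries ℝ ν).partialSum 8 u =
    ∑ j ∈ Finset.range 8, Ring.choose ν j * u ^ j := by
  simp only [FormalMultilinearSeries.partialSum, binomialSeries_apply, List.ofFn_const,
    List.prod_replicate, smul_eq_mul]

lemma choose_succ_real (ν : ℝ) (n : ℕ) :
    Ring.choose ν (n + 1) = Ring.choose ν n * (ν - n) / (n + 1) := by
  have h : ∀ n : ℕ, Ring.choose ν n = (descPochhammer ℤ n).smeval ν / n.factorial := by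
    intro n
    rw [Ring.descPochhammer_eq_factorial_smul_choose]
    have : (n.factorial : ℝ) ≠ 0 := by positivity
    rw [nsmul_eq_mul]; field_simp
  rw [h, h, descPochhammer_succ_right, Polynomial.smeval_mul, Polynomial.smeval_sub,
    Polynomial.smeval_natCast, Polynomial.smeval_X, Nat.factorial_succ]
  have : (n.factorial : ℝ) ≠ 0 := by positivity
  push_cast
  simp
  field_simp

lemma choose_zero_real (ν : ℝ) : Ring.choose ν 0 = 1 := by simp
lemma choose_one_real (ν : ℝ) : Ring.choose ν 1 = ν := by simp
lemma choose_two_real (ν : ℝ) : Ring.choose ν 2 = ν * (ν - 1) / 2 := by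
  rw [choose_succ_real ν 1, choose_one_real]; push_cast; ring
lemma choose_three_real (ν : ℝ) : Ring.choose ν 3 = ν * (ν - 1) * (ν - 2) / 6 := by
  rw [choose_succ_real ν 2, choose_two_real]; push_cast; ring
lemma choose_four_real (ν : ℝ) : Ring.choose ν 4 = ν * (ν - 1) * (ν - 2) * (ν - 3) / 24 := by
  rw [choose_succ_real ν 3, choose_three_real]; push_cast; ring
lemma choose_five_real (ν : ℝ) :
    Ring.choose ν 5 = ν * (ν - 1) * (ν - 2) * (ν - 3) * (ν - 4) / 120 := by
  rw [choose_succ_real ν 4, choose_four_real]; push_cast; ring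
lemma choose_six_real (ν : ℝ) :
    Ring.choose ν 6 = ν * (ν - 1) * (ν - 2) * (ν - 3) * (ν - 4) * (ν - 5) / 720 := by
  rw [choose_succ_real ν 5, choose_five_real]; push_cast; ring

lemma taylor_global (ν : ℝ) (hν : 0 < ν) : ∃ C > 0, ∃ n : ℕ, 4 ≤ n ∧ ∀ u : ℝ, -1 ≤ u →
    |(1 + u) ^ ν - ∑ j ∈ Finset.range 8, Ring.choose ν j * u ^ j| ≤ C * (u ^ 8 + u ^ (2 * n)) := by
  have h := (Real.one_add_rpow_hasFPowerSeriesAt_zero (a := ν)).isBigO_sub_partialSum_pow 8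
  obtain ⟨C, hC, hb⟩ := h.exists_pos
  rw [isBigOWith_iff, Metric.eventually_nhds_iff] at hb
  obtain ⟨δ, hδ, hb⟩ := hb
  set N := ⌈ν⌉₊ with hN
  set n := 4 + N with hn
  set B : ℝ := 1 + ∑ j ∈ Finset.range 8, |Ring.choose ν j| with hB
  have hB0 : 0 < B := by positivity
  refine ⟨C + B * (1 / δ + 1) ^ (2 * n), by positivity, n, by omega, fun u hu => ?_⟩
  have hev : ∀ k : ℕ, |u| ^ (2 * k) = u ^ (2 * k) := fun k => Even.pow_abs ⟨k, by ring⟩ u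
  have h8 : 0 ≤ u ^ 8 := by positivity
  have h2n : 0 ≤ u ^ (2 * n) := by rw [pow_mul]; positivity
  have hK : 0 ≤ B * (1 / δ + 1) ^ (2 * n) := by positivity
  rcases lt_or_ge |u| δ with hs | hs
  · have := hb (y := u) (by simpa using hs)
    rw [partial_eq] at this
    simp only [zero_add, Real.norm_eq_abs, abs_pow, abs_abs] at this
    rw [hev 4] at this
    refine this.trans ?_
    nlinarith [mul_nonneg hK h8, mul_nonneg hK h2n, mul_nonneg hC.le h2n]
  · have hbase : 1 ≤ 1 + |u| := by linarith [abs_nonneg u]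
    have h1 : |(1 + u) ^ ν| ≤ (1 + |u|) ^ (2 * n) := by
      rw [abs_of_nonneg (Real.rpow_nonneg (by linarith) _)]
      calc (1 + u) ^ ν ≤ (1 + |u|) ^ ν :=
            Real.rpow_le_rpow (by linarith) (by linarith [le_abs_self u]) hν.le
        _ ≤ (1 + |u|) ^ (N : ℝ) := Real.rpow_le_rpow_of_exponent_le hbase (Nat.le_ceil ν)
        _ = (1 + |u|) ^ N := Real.rpow_natCast _ _
        _ ≤ _ := pow_le_pow_right₀ hbase (by omega)
    have h2 : |∑ j ∈ Finset.range 8, Ring.choose ν j * u ^ j| ≤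
        (∑ j ∈ Finset.range 8, |Ring.choose ν j|) * (1 + |u|) ^ (2 * n) := by
      refine (Finset.abs_sum_le_sum_abs _ _).trans ?_
      rw [Finset.sum_mul]
      refine Finset.sum_le_sum (fun j hj => ?_)
      rw [abs_mul, abs_pow]
      refine mul_le_mul_of_nonneg_left ?_ (abs_nonneg _)
      have hj8 := Finset.mem_range.mp hj
      calc |u| ^ j ≤ (1 + |u|) ^ j := pow_le_pow_left₀ (abs_nonneg u) (by linarith) j
        _ ≤ _ := pow_le_pow_right₀ hbase (by omega)
    have h3 : 1 + |u| ≤ (1 / δ + 1) * |u| := by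
      have : 1 ≤ 1 / δ * |u| := by
        rw [div_mul_eq_mul_div, le_div_iff₀ hδ]; linarith
      linarith
    have h4 : (1 + |u|) ^ (2 * n) ≤ (1 / δ + 1) ^ (2 * n) * u ^ (2 * n) := by
      rw [← hev n, ← mul_pow]
      exact pow_le_pow_left₀ (by linarith) h3 _
    have h5 := mul_le_mul_of_nonneg_left h4 hB0.le
    calc _ ≤ |(1 + u) ^ ν| + |∑ j ∈ Finset.range 8, Ring.choose ν j * u ^ j| := abs_sub _ _
      _ ≤ B * (1 + |u|) ^ (2 * n) := by rw [hB, add_mul, one_mul]; exact add_le_add h1 h2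
      _ ≤ _ := h5
      _ ≤ _ := by nlinarith [mul_nonneg hK h8, mul_nonneg hC.le h8, mul_nonneg hC.le h2n]

lemma moment_eqn (ν : ℝ) (hν : 0 < ν) (k : ℕ) :
    BO 4 (fun x => ∑ j ∈ Finset.range 8, Ring.choose ν j * cm ν x (k + j) -
      ∑ i ∈ Finset.range (k + 1), (x⁻¹) ^ (k - i) * (k.choose i) * cm ν x i) := by
  obtain ⟨C, hC, n, hn, H⟩ := taylor_global ν hν
  have hO : BO 4 (fun x => C * (cm ν x 8 + cm ν x (2 * n) + cm ν x (8 + 2 * k)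
      + cm ν x (2 * n + 2 * k))) := by
    refine IsBigO.const_mul_left ?_ C
    exact (((BO_moment ν hν 4 8 (by omega)).add (BO_moment ν hν 4 (2 * n) (by omega))).add
      (BO_moment ν hν 4 (8 + 2 * k) (by omega))).add (BO_moment ν hν 4 (2 * n + 2 * k) (by omega))
  refine IsBigO.trans (IsBigO.of_bound 1 ?_) hO
  filter_upwards [eventually_gt_atTop 0] with x hx
  rw [one_mul]
  refine le_trans ?_ (le_abs_self _)
  rw [Real.norm_eq_abs]
  have hZ := cZ_pos ν x hν hx
  have sm := fun k => summable_cu ν x hν hx k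
  have hs1 : Summable (fun i => (cu x i + x⁻¹) ^ k * cw ν x i) := by
    simpa using summable_cu_pow ν x hν hx x⁻¹ 0 k 0
  obtain ⟨hs2, he⟩ := stein ν x hν hx (fun u => u ^ k) hs1
  have e1 : ∑ i ∈ Finset.range (k + 1), (x⁻¹) ^ (k - i) * (k.choose i) * cm ν x i =
      (∑' i, (cu x i + x⁻¹) ^ k * cw ν x i) / cmpZ (x ^ ν) ν := by
    unfold cm cE
    simp only [← mul_div_assoc, ← Finset.sum_div, ← tsum_mul_left]
    congr 1
    rw [← Summable.tsum_finsetSum (fun i _ => (sm i).mul_left _)]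
    refine tsum_congr (fun i => ?_)
    rw [add_pow, Finset.sum_mul]
    refine Finset.sum_congr rfl (fun j _ => ?_)
    ring
  have e2 : ∑ j ∈ Finset.range 8, Ring.choose ν j * cm ν x (k + j) =
      (∑' i, (∑ j ∈ Finset.range 8, Ring.choose ν j * cu x i ^ j) * cu x i ^ k * cw ν x i)
        / cmpZ (x ^ ν) ν := by
    unfold cm cE
    simp only [← mul_div_assoc, ← Finset.sum_div, ← tsum_mul_left]
    congr 1
    rw [← Summable.tsum_finsetSum (fun i _ => (sm (k + i)).mul_left _)]
    refine tsum_congr (fun i => ?_)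
    rw [Finset.sum_mul, Finset.sum_mul]
    refine Finset.sum_congr rfl (fun j _ => ?_)
    ring
  have hs3 : Summable
      (fun i => (∑ j ∈ Finset.range 8, Ring.choose ν j * cu x i ^ j) * cu x i ^ k * cw ν x i) := by
    have : Summable (fun i => ∑ j ∈ Finset.range 8, Ring.choose ν j * (cu x i ^ (k + j) * cw ν x i)) :=
      summable_sum (fun j _ => (sm (k + j)).mul_left _)
    refine this.congr (fun i => ?_)
    rw [Finset.sum_mul, Finset.sum_mul]
    refine Finset.sum_congr rfl (fun j _ => ?_)
    ring
  have key : ∀ i, |(∑ j ∈ Finset.range 8, Ring.choose ν j * cu x i ^ j) * cu x i ^ k * cw ν x i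
      - (1 + cu x i) ^ ν * cu x i ^ k * cw ν x i| ≤
      C * (cu x i ^ 8 * cw ν x i + cu x i ^ (2 * n) * cw ν x i + cu x i ^ (8 + 2 * k) * cw ν x i
      + cu x i ^ (2 * n + 2 * k) * cw ν x i) := by
    intro i
    have h1 := H (cu x i) (cu_ge x hx i)
    set u := cu x i
    have h2 : |u ^ k| ≤ 1 + u ^ (2 * k) := by
      rw [mul_comm 2 k, pow_mul, ← sq_abs (u ^ k)]
      nlinarith [sq_nonneg (|u ^ k| - 1), abs_nonneg (u ^ k)]
    have h8 : 0 ≤ u ^ 8 := by positivity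
    have h2n : 0 ≤ u ^ (2 * n) := by rw [pow_mul]; positivity
    have hw := (cw_pos ν x hx i).le
    have h3 := mul_le_mul (mul_le_mul h1 h2 (abs_nonneg _) (by positivity)) (le_refl (cw ν x i)) hw
      (by have : 0 ≤ u ^ (2 * k) := by { rw [pow_mul]; positivity }
          positivity)
    have e : |(∑ j ∈ Finset.range 8, Ring.choose ν j * u ^ j) * u ^ k * cw ν x i
      - (1 + u) ^ ν * u ^ k * cw ν x i| =
      |(1 + u) ^ ν - ∑ j ∈ Finset.range 8, Ring.choose ν j * u ^ j| * |u ^ k| * cw ν x i := by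
      rw [← abs_mul]
      nth_rewrite 3 [← abs_of_nonneg hw]
      rw [← abs_mul, abs_sub_comm]
      congr 1; ring
    rw [e]
    refine h3.trans (le_of_eq ?_)
    ring
  have hR : Summable (fun i => C * (cu x i ^ 8 * cw ν x i + cu x i ^ (2 * n) * cw ν x i
      + cu x i ^ (8 + 2 * k) * cw ν x i + cu x i ^ (2 * n + 2 * k) * cw ν x i)) :=
    ((((sm 8).add (sm (2 * n))).add (sm (8 + 2 * k))).add (sm (2 * n + 2 * k))).mul_left C
  have e3 : C * (cm ν x 8 + cm ν x (2 * n) + cm ν x (8 + 2 * k) + cm ν x (2 * n + 2 * k)) =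
      (∑' i, C * (cu x i ^ 8 * cw ν x i + cu x i ^ (2 * n) * cw ν x i
      + cu x i ^ (8 + 2 * k) * cw ν x i + cu x i ^ (2 * n + 2 * k) * cw ν x i)) /
        cmpZ (x ^ ν) ν := by
    rw [tsum_mul_left, (((sm 8).add (sm (2 * n))).add (sm (8 + 2 * k))).tsum_add (sm (2 * n + 2 * k)),
      ((sm 8).add (sm (2 * n))).tsum_add (sm (8 + 2 * k)), (sm 8).tsum_add (sm (2 * n))]
    unfold cm cE
    ring
  rw [e1, e2, ← he, ← sub_div, abs_div, abs_of_pos hZ, e3]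
  refine div_le_div_of_nonneg_right ?_ hZ.le
  rw [← hs3.tsum_sub hs2]
  simp only [← Real.norm_eq_abs] at key ⊢
  exact tsum_of_norm_bounded hR.hasSum key

lemma BO.add {n : ℕ} {f g : ℝ → ℝ} (hf : BO n f) (hg : BO n g) : BO n (fun x => f x + g x) :=
  IsBigO.add hf hg
lemma BO.sub {n : ℕ} {f g : ℝ → ℝ} (hf : BO n f) (hg : BO n g) : BO n (fun x => f x - g x) :=
  IsBigO.sub hf hg
lemma BO.cmul {n : ℕ} {f : ℝ → ℝ} (c : ℝ) (hf : BO n f) : BO n (fun x => c * f x) :=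
  IsBigO.const_mul_left hf c
lemma BO.emul {n : ℕ} {f : ℝ → ℝ} (j : ℕ) (hf : BO n f) : BO (j + n) (fun x => (x⁻¹) ^ j * f x) := by
  have := (isBigO_refl (fun x : ℝ => (x⁻¹) ^ j) atTop).mul hf
  refine this.congr_right (fun x => ?_)
  rw [pow_add]
lemma BO.eps (n : ℕ) : BO n (fun x => (x⁻¹) ^ n) := isBigO_refl _ _
lemma BO.congr {n : ℕ} {f g : ℝ → ℝ} (hf : BO n f) (h : ∀ x : ℝ, 0 < x → f x = g x) : BO n g := by
  refine IsBigO.congr' hf ?_ EventuallyEq.rfl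
  filter_upwards [eventually_gt_atTop 0] with x hx using h x hx

lemma Q0 (ν : ℝ) (hν : 0 < ν) : BO 4 (fun x => (Ring.choose ν 1 * cm ν x 1 + Ring.choose ν 2 * cm ν x 2 + Ring.choose ν 3 * cm ν x 3 + Ring.choose ν 4 * cm ν x 4 + Ring.choose ν 5 * cm ν x 5 + Ring.choose ν 6 * cm ν x 6 + Ring.choose ν 7 * cm ν x 7)) := by
  refine (moment_eqn ν hν 0).congr (fun x hx => ?_)
  simp only [Finset.sum_range_succ, Finset.sum_range_zero, cm_zero ν x hν hx, choose_zero_real]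
  simp [Nat.choose]
  try ring

lemma Q1 (ν : ℝ) (hν : 0 < ν) : BO 4 (fun x => (Ring.choose ν 1 * cm ν x 2 + Ring.choose ν 2 * cm ν x 3 + Ring.choose ν 3 * cm ν x 4 + Ring.choose ν 4 * cm ν x 5 + Ring.choose ν 5 * cm ν x 6 + Ring.choose ν 6 * cm ν x 7 + Ring.choose ν 7 * cm ν x 8) - ((x⁻¹)^1)) := by
  refine (moment_eqn ν hν 1).congr (fun x hx => ?_)
  simp only [Finset.sum_range_succ, Finset.sum_range_zero, cm_zero ν x hν hx, choose_zero_real]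
  simp [Nat.choose]
  try ring

lemma Q2 (ν : ℝ) (hν : 0 < ν) : BO 4 (fun x => (Ring.choose ν 1 * cm ν x 3 + Ring.choose ν 2 * cm ν x 4 + Ring.choose ν 3 * cm ν x 5 + Ring.choose ν 4 * cm ν x 6 + Ring.choose ν 5 * cm ν x 7 + Ring.choose ν 6 * cm ν x 8 + Ring.choose ν 7 * cm ν x 9) - ((x⁻¹)^2 + 2 * ((x⁻¹)^1 * cm ν x 1))) := by
  refine (moment_eqn ν hν 2).congr (fun x hx => ?_)
  simp only [Finset.sum_range_succ, Finset.sum_range_zero, cm_zero ν x hν hx, choose_zero_real]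
  simp [Nat.choose]
  try ring

lemma Q3 (ν : ℝ) (hν : 0 < ν) : BO 4 (fun x => (Ring.choose ν 1 * cm ν x 4 + Ring.choose ν 2 * cm ν x 5 + Ring.choose ν 3 * cm ν x 6 + Ring.choose ν 4 * cm ν x 7 + Ring.choose ν 5 * cm ν x 8 + Ring.choose ν 6 * cm ν x 9 + Ring.choose ν 7 * cm ν x 10) - ((x⁻¹)^3 + 3 * ((x⁻¹)^2 * cm ν x 1) + 3 * ((x⁻¹)^1 * cm ν x 2))) := by
  refine (moment_eqn ν hν 3).congr (fun x hx => ?_)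
  simp only [Finset.sum_range_succ, Finset.sum_range_zero, cm_zero ν x hν hx, choose_zero_real]
  simp [Nat.choose]
  try ring

lemma Q4 (ν : ℝ) (hν : 0 < ν) : BO 4 (fun x => (Ring.choose ν 1 * cm ν x 5 + Ring.choose ν 2 * cm ν x 6 + Ring.choose ν 3 * cm ν x 7 + Ring.choose ν 4 * cm ν x 8 + Ring.choose ν 5 * cm ν x 9 + Ring.choose ν 6 * cm ν x 10 + Ring.choose ν 7 * cm ν x 11) - ((x⁻¹)^4 + 4 * ((x⁻¹)^3 * cm ν x 1) + 6 * ((x⁻¹)^2 * cm ν x 2) + 4 * ((x⁻¹)^1 * cm ν x 3))) := by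
  refine (moment_eqn ν hν 4).congr (fun x hx => ?_)
  simp only [Finset.sum_range_succ, Finset.sum_range_zero, cm_zero ν x hν hx, choose_zero_real]
  simp [Nat.choose]
  try ring

lemma Q5 (ν : ℝ) (hν : 0 < ν) : BO 4 (fun x => (Ring.choose ν 1 * cm ν x 6 + Ring.choose ν 2 * cm ν x 7 + Ring.choose ν 3 * cm ν x 8 + Ring.choose ν 4 * cm ν x 9 + Ring.choose ν 5 * cm ν x 10 + Ring.choose ν 6 * cm ν x 11 + Ring.choose ν 7 * cm ν x 12) - ((x⁻¹)^5 + 5 * ((x⁻¹)^4 * cm ν x 1) + 10 * ((x⁻¹)^3 * cm ν x 2) + 10 * ((x⁻¹)^2 * cm ν x 3) + 5 * ((x⁻¹)^1 * cm ν x 4))) := by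
  refine (moment_eqn ν hν 5).congr (fun x hx => ?_)
  simp only [Finset.sum_range_succ, Finset.sum_range_zero, cm_zero ν x hν hx, choose_zero_real]
  simp [Nat.choose]
  try ring

lemma Q6 (ν : ℝ) (hν : 0 < ν) : BO 4 (fun x => (Ring.choose ν 1 * cm ν x 7 + Ring.choose ν 2 * cm ν x 8 + Ring.choose ν 3 * cm ν x 9 + Ring.choose ν 4 * cm ν x 10 + Ring.choose ν 5 * cm ν x 11 + Ring.choose ν 6 * cm ν x 12 + Ring.choose ν 7 * cm ν x 13) - ((x⁻¹)^6 + 6 * ((x⁻¹)^5 * cm ν x 1) + 15 * ((x⁻¹)^4 * cm ν x 2) + 20 * ((x⁻¹)^3 * cm ν x 3) + 15 * ((x⁻¹)^2 * cm ν x 4) + 6 * ((x⁻¹)^1 * cm ν x 5))) := by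
  refine (moment_eqn ν hν 6).congr (fun x hx => ?_)
  simp only [Finset.sum_range_succ, Finset.sum_range_zero, cm_zero ν x hν hx, choose_zero_real]
  simp [Nat.choose]
  try ring

set_option maxHeartbeats 4000000 in
lemma first_moment (ν : ℝ) (hν : 0 < ν) : BO 4 (fun x => cm ν x 1 - (-(ν - 1) / (2 * ν) * (x⁻¹)^1
   - (ν ^ 2 - 1) / (24 * ν ^ 2) * (x⁻¹) ^ 2 - (ν ^ 2 - 1) / (24 * ν ^ 3) * (x⁻¹) ^ 3)) := by
  have hν0 : ν ≠ 0 := hν.ne'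
  have c1 := BO_moment ν hν 0 1 (by norm_num)
  have c2 := BO_moment ν hν 1 2 (by norm_num)
  have c3 := BO_moment ν hν 1 3 (by norm_num)
  have c4 := BO_moment ν hν 2 4 (by norm_num)
  have c5 := BO_moment ν hν 2 5 (by norm_num)
  have c6 := BO_moment ν hν 3 6 (by norm_num)
  have c7 := BO_moment ν hν 3 7 (by norm_num)
  have c8 := BO_moment ν hν 4 8 (by norm_num)
  have c9 := BO_moment ν hν 4 9 (by norm_num)
  have c10 := BO_moment ν hν 5 10 (by norm_num)
  have c11 := BO_moment ν hν 5 11 (by norm_num)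
  have c12 := BO_moment ν hν 6 12 (by norm_num)
  have c13 := BO_moment ν hν 6 13 (by norm_num)
  have d1 : BO 1 (fun x => cm ν x 1) := by
    refine (((((((((Q0 ν hν).mono (by norm_num : 1 ≤ 4)).sub (c2.cmul (Ring.choose ν 2))).sub (c3.cmul (Ring.choose ν 3))).sub ((c4.mono (by norm_num : 1 ≤ 2)).cmul (Ring.choose ν 4))).sub ((c5.mono (by norm_num : 1 ≤ 2)).cmul (Ring.choose ν 5))).sub ((c6.mono (by norm_num : 1 ≤ 3)).cmul (Ring.choose ν 6))).sub ((c7.mono (by norm_num : 1 ≤ 3)).cmul (Ring.choose ν 7))).cmul ν⁻¹).congr (fun x hx => ?_)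
    simp only [choose_one_real, choose_two_real, choose_three_real, choose_four_real, choose_five_real, choose_six_real]
    field_simp
    ring
  have d3 : BO 2 (fun x => cm ν x 3) := by
    refine (((((((((((Q2 ν hν).mono (by norm_num : 2 ≤ 4)).sub (c4.cmul (Ring.choose ν 2))).sub (c5.cmul (Ring.choose ν 3))).sub ((c6.mono (by norm_num : 2 ≤ 3)).cmul (Ring.choose ν 4))).sub ((c7.mono (by norm_num : 2 ≤ 3)).cmul (Ring.choose ν 5))).sub ((c8.mono (by norm_num : 2 ≤ 4)).cmul (Ring.choose ν 6))).sub ((c9.mono (by norm_num : 2 ≤ 4)).cmul (Ring.choose ν 7))).add (BO.eps 2)).add ((d1.emul 1).cmul 2)).cmul ν⁻¹).congr (fun x hx => ?_)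
    simp only [choose_one_real, choose_two_real, choose_three_real, choose_four_real, choose_five_real, choose_six_real]
    field_simp
    ring
  have d5 : BO 3 (fun x => cm ν x 5) := by
    refine (((((((((((((Q4 ν hν).mono (by norm_num : 3 ≤ 4)).sub (c6.cmul (Ring.choose ν 2))).sub (c7.cmul (Ring.choose ν 3))).sub ((c8.mono (by norm_num : 3 ≤ 4)).cmul (Ring.choose ν 4))).sub ((c9.mono (by norm_num : 3 ≤ 4)).cmul (Ring.choose ν 5))).sub ((c10.mono (by norm_num : 3 ≤ 5)).cmul (Ring.choose ν 6))).sub ((c11.mono (by norm_num : 3 ≤ 5)).cmul (Ring.choose ν 7))).add ((BO.eps 4).mono (by norm_num : 3 ≤ 4))).add (((d1.emul 3).mono (by norm_num : 3 ≤ 3+1)).cmul 4)).add ((c2.emul 2).cmul 6)).add ((d3.emul 1).cmul 4)).cmul ν⁻¹).congr (fun x hx => ?_)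
    simp only [choose_one_real, choose_two_real, choose_three_real, choose_four_real, choose_five_real, choose_six_real]
    field_simp
    ring
  have d7 : BO 4 (fun x => cm ν x 7) := by
    refine ((((((((((((((Q6 ν hν).sub (c8.cmul (Ring.choose ν 2))).sub (c9.cmul (Ring.choose ν 3))).sub ((c10.mono (by norm_num : 4 ≤ 5)).cmul (Ring.choose ν 4))).sub ((c11.mono (by norm_num : 4 ≤ 5)).cmul (Ring.choose ν 5))).sub ((c12.mono (by norm_num : 4 ≤ 6)).cmul (Ring.choose ν 6))).sub ((c13.mono (by norm_num : 4 ≤ 6)).cmul (Ring.choose ν 7))).add ((BO.eps 6).mono (by norm_num : 4 ≤ 6))).add (((d1.emul 5).mono (by norm_num : 4 ≤ 5+1)).cmul 6)).add (((c2.emul 4).mono (by norm_num : 4 ≤ 4+1)).cmul 15)).add (((d3.mono (by norm_num : 1 ≤ 2)).emul 3).cmul 20)).add ((c4.emul 2).cmul 15)).add ((d5.emul 1).cmul 6)).cmul ν⁻¹).congr (fun x hx => ?_)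
    simp only [choose_one_real, choose_two_real, choose_three_real, choose_four_real, choose_five_real, choose_six_real]
    field_simp
    ring
  have e2_2 : BO 2 (fun x => cm ν x 2 - (((1/1)/ν^1) * (x⁻¹)^1)) := by
    refine (((((((((Q1 ν hν).mono (by norm_num : 2 ≤ 4)).sub (d3.cmul (Ring.choose ν 2))).sub (c4.cmul (Ring.choose ν 3))).sub ((d5.mono (by norm_num : 2 ≤ 3)).cmul (Ring.choose ν 4))).sub ((c6.mono (by norm_num : 2 ≤ 3)).cmul (Ring.choose ν 5))).sub ((d7.mono (by norm_num : 2 ≤ 4)).cmul (Ring.choose ν 6))).sub ((c8.mono (by norm_num : 2 ≤ 4)).cmul (Ring.choose ν 7))).cmul ν⁻¹).congr (fun x hx => ?_)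
    simp only [choose_one_real, choose_two_real, choose_three_real, choose_four_real, choose_five_real, choose_six_real]
    field_simp
    ring
  have e1_2 : BO 2 (fun x => cm ν x 1 - (((1/2)/ν^1 + (-1/2)) * (x⁻¹)^1)) := by
    refine (((((((((Q0 ν hν).mono (by norm_num : 2 ≤ 4)).sub (e2_2.cmul (Ring.choose ν 2))).sub (d3.cmul (Ring.choose ν 3))).sub (c4.cmul (Ring.choose ν 4))).sub ((d5.mono (by norm_num : 2 ≤ 3)).cmul (Ring.choose ν 5))).sub ((c6.mono (by norm_num : 2 ≤ 3)).cmul (Ring.choose ν 6))).sub ((d7.mono (by norm_num : 2 ≤ 4)).cmul (Ring.choose ν 7))).cmul ν⁻¹).congr (fun x hx => ?_)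
    simp only [choose_one_real, choose_two_real, choose_three_real, choose_four_real, choose_five_real, choose_six_real]
    field_simp
    ring
  have e4_3 : BO 3 (fun x => cm ν x 4 - (((3/1)/ν^2) * (x⁻¹)^2)) := by
    refine ((((((((((((Q3 ν hν).mono (by norm_num : 3 ≤ 4)).sub (d5.cmul (Ring.choose ν 2))).sub (c6.cmul (Ring.choose ν 3))).sub ((d7.mono (by norm_num : 3 ≤ 4)).cmul (Ring.choose ν 4))).sub ((c8.mono (by norm_num : 3 ≤ 4)).cmul (Ring.choose ν 5))).sub ((c9.mono (by norm_num : 3 ≤ 4)).cmul (Ring.choose ν 6))).sub ((c10.mono (by norm_num : 3 ≤ 5)).cmul (Ring.choose ν 7))).add (BO.eps 3)).add ((d1.emul 2).cmul 3)).add ((e2_2.emul 1).cmul 3)).cmul ν⁻¹).congr (fun x hx => ?_)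
    simp only [choose_one_real, choose_two_real, choose_three_real, choose_four_real, choose_five_real, choose_six_real]
    field_simp
    ring
  have e3_3 : BO 3 (fun x => cm ν x 3 - (((5/2)/ν^2 + (-3/2)/ν^1) * (x⁻¹)^2)) := by
    refine ((((((((((Q2 ν hν).mono (by norm_num : 3 ≤ 4)).sub (e4_3.cmul (Ring.choose ν 2))).sub (d5.cmul (Ring.choose ν 3))).sub (c6.cmul (Ring.choose ν 4))).sub ((d7.mono (by norm_num : 3 ≤ 4)).cmul (Ring.choose ν 5))).sub ((c8.mono (by norm_num : 3 ≤ 4)).cmul (Ring.choose ν 6))).sub ((c9.mono (by norm_num : 3 ≤ 4)).cmul (Ring.choose ν 7))).add ((e1_2.emul 1).cmul 2)).cmul ν⁻¹).congr (fun x hx => ?_)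
    simp only [choose_one_real, choose_two_real, choose_three_real, choose_four_real, choose_five_real, choose_six_real]
    field_simp
    ring
  have e2_3 : BO 3 (fun x => cm ν x 2 - (((1/1)/ν^1) * (x⁻¹)^1 + ((1/4)/ν^2 + (-1/2)/ν^1 + (1/4)) * (x⁻¹)^2)) := by
    refine (((((((((Q1 ν hν).mono (by norm_num : 3 ≤ 4)).sub (e3_3.cmul (Ring.choose ν 2))).sub (e4_3.cmul (Ring.choose ν 3))).sub (d5.cmul (Ring.choose ν 4))).sub (c6.cmul (Ring.choose ν 5))).sub ((d7.mono (by norm_num : 3 ≤ 4)).cmul (Ring.choose ν 6))).sub ((c8.mono (by norm_num : 3 ≤ 4)).cmul (Ring.choose ν 7))).cmul ν⁻¹).congr (fun x hx => ?_)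
    simp only [choose_one_real, choose_two_real, choose_three_real, choose_four_real, choose_five_real, choose_six_real]
    field_simp
    ring
  have e1_3 : BO 3 (fun x => cm ν x 1 - (((1/2)/ν^1 + (-1/2)) * (x⁻¹)^1 + ((1/24)/ν^2 + (-1/24)) * (x⁻¹)^2)) := by
    refine (((((((((Q0 ν hν).mono (by norm_num : 3 ≤ 4)).sub (e2_3.cmul (Ring.choose ν 2))).sub (e3_3.cmul (Ring.choose ν 3))).sub (e4_3.cmul (Ring.choose ν 4))).sub (d5.cmul (Ring.choose ν 5))).sub (c6.cmul (Ring.choose ν 6))).sub ((d7.mono (by norm_num : 3 ≤ 4)).cmul (Ring.choose ν 7))).cmul ν⁻¹).congr (fun x hx => ?_)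
    simp only [choose_one_real, choose_two_real, choose_three_real, choose_four_real, choose_five_real, choose_six_real]
    field_simp
    ring
  have e6_4 : BO 4 (fun x => cm ν x 6 - (((15/1)/ν^3) * (x⁻¹)^3)) := by
    refine (((((((((((((Q5 ν hν).sub (d7.cmul (Ring.choose ν 2))).sub (c8.cmul (Ring.choose ν 3))).sub (c9.cmul (Ring.choose ν 4))).sub ((c10.mono (by norm_num : 4 ≤ 5)).cmul (Ring.choose ν 5))).sub ((c11.mono (by norm_num : 4 ≤ 5)).cmul (Ring.choose ν 6))).sub ((c12.mono (by norm_num : 4 ≤ 6)).cmul (Ring.choose ν 7))).add ((BO.eps 5).mono (by norm_num : 4 ≤ 5))).add (((d1.emul 4).mono (by norm_num : 4 ≤ 4+1)).cmul 5)).add ((c2.emul 3).cmul 10)).add ((d3.emul 2).cmul 10)).add ((e4_3.emul 1).cmul 5)).cmul ν⁻¹).congr (fun x hx => ?_)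
    simp only [choose_one_real, choose_two_real, choose_three_real, choose_four_real, choose_five_real, choose_six_real]
    field_simp
    ring
  have e5_4 : BO 4 (fun x => cm ν x 5 - (((35/2)/ν^3 + (-15/2)/ν^2) * (x⁻¹)^3)) := by
    refine ((((((((((((Q4 ν hν).sub (e6_4.cmul (Ring.choose ν 2))).sub (d7.cmul (Ring.choose ν 3))).sub (c8.cmul (Ring.choose ν 4))).sub (c9.cmul (Ring.choose ν 5))).sub ((c10.mono (by norm_num : 4 ≤ 5)).cmul (Ring.choose ν 6))).sub ((c11.mono (by norm_num : 4 ≤ 5)).cmul (Ring.choose ν 7))).add (BO.eps 4)).add ((d1.emul 3).cmul 4)).add ((e2_2.emul 2).cmul 6)).add ((e3_3.emul 1).cmul 4)).cmul ν⁻¹).congr (fun x hx => ?_)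
    simp only [choose_one_real, choose_two_real, choose_three_real, choose_four_real, choose_five_real, choose_six_real]
    field_simp
    ring
  have e4_4 : BO 4 (fun x => cm ν x 4 - (((3/1)/ν^2) * (x⁻¹)^2 + ((9/2)/ν^3 + (-5/1)/ν^2 + (3/2)/ν^1) * (x⁻¹)^3)) := by
    refine ((((((((((Q3 ν hν).sub (e5_4.cmul (Ring.choose ν 2))).sub (e6_4.cmul (Ring.choose ν 3))).sub (d7.cmul (Ring.choose ν 4))).sub (c8.cmul (Ring.choose ν 5))).sub (c9.cmul (Ring.choose ν 6))).sub ((c10.mono (by norm_num : 4 ≤ 5)).cmul (Ring.choose ν 7))).add ((e1_2.emul 2).cmul 3)).add ((e2_3.emul 1).cmul 3)).cmul ν⁻¹).congr (fun x hx => ?_)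
    simp only [choose_one_real, choose_two_real, choose_three_real, choose_four_real, choose_five_real, choose_six_real]
    field_simp
    ring
  have e3_4 : BO 4 (fun x => cm ν x 3 - (((5/2)/ν^2 + (-3/2)/ν^1) * (x⁻¹)^2 + ((1/4)/ν^3 + (-3/8)/ν^2 + (1/4)/ν^1 + (-1/8)) * (x⁻¹)^3)) := by
    refine (((((((((Q2 ν hν).sub (e4_4.cmul (Ring.choose ν 2))).sub (e5_4.cmul (Ring.choose ν 3))).sub (e6_4.cmul (Ring.choose ν 4))).sub (d7.cmul (Ring.choose ν 5))).sub (c8.cmul (Ring.choose ν 6))).sub (c9.cmul (Ring.choose ν 7))).add ((e1_3.emul 1).cmul 2)).cmul ν⁻¹).congr (fun x hx => ?_)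
    simp only [choose_one_real, choose_two_real, choose_three_real, choose_four_real, choose_five_real, choose_six_real]
    field_simp
    ring
  have e2_4 : BO 4 (fun x => cm ν x 2 - (((1/1)/ν^1) * (x⁻¹)^1 + ((1/4)/ν^2 + (-1/2)/ν^1 + (1/4)) * (x⁻¹)^2 + ((-1/24)/ν^2 + (1/24)) * (x⁻¹)^3)) := by
    refine ((((((((Q1 ν hν).sub (e3_4.cmul (Ring.choose ν 2))).sub (e4_4.cmul (Ring.choose ν 3))).sub (e5_4.cmul (Ring.choose ν 4))).sub (e6_4.cmul (Ring.choose ν 5))).sub (d7.cmul (Ring.choose ν 6))).sub (c8.cmul (Ring.choose ν 7))).cmul ν⁻¹).congr (fun x hx => ?_)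
    simp only [choose_one_real, choose_two_real, choose_three_real, choose_four_real, choose_five_real, choose_six_real]
    field_simp
    ring
  have e1_4 : BO 4 (fun x => cm ν x 1 - (((1/2)/ν^1 + (-1/2)) * (x⁻¹)^1 + ((1/24)/ν^2 + (-1/24)) * (x⁻¹)^2 + ((1/24)/ν^3 + (-1/24)/ν^1) * (x⁻¹)^3)) := by
    refine ((((((((Q0 ν hν).sub (e2_4.cmul (Ring.choose ν 2))).sub (e3_4.cmul (Ring.choose ν 3))).sub (e4_4.cmul (Ring.choose ν 4))).sub (e5_4.cmul (Ring.choose ν 5))).sub (e6_4.cmul (Ring.choose ν 6))).sub (d7.cmul (Ring.choose ν 7))).cmul ν⁻¹).congr (fun x hx => ?_)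
    simp only [choose_one_real, choose_two_real, choose_three_real, choose_four_real, choose_five_real, choose_six_real]
    field_simp
    ring
  refine e1_4.congr (fun x hx => ?_)
  field_simp
  ring

open MeasureTheory in
lemma integral_floor_eq_tsum (G : ℕ → ℝ) (A a : ℝ) (ha : 0 < a)
    (hG : ∀ k, |G k| ≤ A * Real.exp (-a * k)) :
    ∫ s in Set.Ioi (0 : ℝ), G ⌊s⌋₊ = ∑' k, G k := by
  have hA : 0 ≤ A := by
    have := (abs_nonneg _).trans (hG 0)
    simpa using this
  have hmeas : Measurable (fun s : ℝ => G ⌊s⌋₊) := measurable_from_nat.comp Nat.measurable_floor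
  have hU : (Set.Ici (0 : ℝ)) = ⋃ k : ℕ, Set.Ico (k : ℝ) (k + 1) := by
    ext s
    simp only [Set.mem_Ici, Set.mem_iUnion, Set.mem_Ico]
    constructor
    · intro hs
      exact ⟨⌊s⌋₊, Nat.floor_le hs, Nat.lt_floor_add_one s⟩
    · rintro ⟨k, hk, _⟩
      exact (Nat.cast_nonneg k).trans hk
  have hIntG : IntegrableOn (fun s : ℝ => G ⌊s⌋₊) (Set.Ici 0) := by
    rw [integrableOn_Ici_iff_integrableOn_Ioi]
    have h1 : IntegrableOn (fun s : ℝ => A * Real.exp a * Real.exp (-a * s)) (Set.Ioi 0) :=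
      (integrableOn_exp_mul_Ioi (by linarith) 0).const_mul _
    refine Integrable.mono' h1 hmeas.aestronglyMeasurable ?_
    filter_upwards with s
    refine (hG _).trans ?_
    rw [mul_assoc, ← Real.exp_add]
    refine mul_le_mul_of_nonneg_left (Real.exp_le_exp.mpr ?_) hA
    have := (Nat.lt_floor_add_one s).le
    nlinarith
  rw [← integral_Ici_eq_integral_Ioi]
  rw [hU] at hIntG ⊢
  rw [integral_iUnion (fun k => measurableSet_Ico) ?_ hIntG]
  · refine tsum_congr (fun k => ?_)
    have : ∀ s ∈ Set.Ico (k : ℝ) (k + 1), G ⌊s⌋₊ = G k := by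
      intro s hs
      rw [(Nat.floor_eq_iff ((Nat.cast_nonneg k).trans hs.1)).mpr hs]
    rw [setIntegral_congr_fun measurableSet_Ico this]
    simp
  · intro i j hij
    rw [Function.onFun, Set.disjoint_left]
    intro s hi hj
    apply hij
    rw [← (Nat.floor_eq_iff ((Nat.cast_nonneg i).trans hi.1)).mpr hi,
      ← (Nat.floor_eq_iff ((Nat.cast_nonneg j).trans hj.1)).mpr hj]

open MeasureTheory in
lemma riemann_limit (F : ℕ → ℕ → ℝ) (g : ℝ → ℝ) (A a : ℝ) (ha : 0 < a)
    (hF : ∀ n, 1 ≤ n → ∀ k : ℕ, |F n k| ≤ A * Real.exp (-a * (k / √n)))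
    (hp : ∀ t : ℝ, 0 < t → Tendsto (fun n : ℕ => F n ⌊t * √n⌋₊) atTop (𝓝 (g t))) :
    Tendsto (fun n : ℕ => (√n)⁻¹ * ∑' k, F n k) atTop (𝓝 (∫ t in Set.Ioi (0 : ℝ), g t)) := by
  have hA : 0 ≤ A := by
    have := (abs_nonneg _).trans (hF 1 le_rfl 0)
    simpa using this
  have h1 : Tendsto (fun n : ℕ => ∫ t in Set.Ioi (0 : ℝ), F n ⌊t * √n⌋₊) atTop
      (𝓝 (∫ t in Set.Ioi (0 : ℝ), g t)) := by
    refine tendsto_integral_filter_of_dominated_convergence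
      (fun s : ℝ => A * Real.exp a * Real.exp (-a * s)) ?_ ?_ ?_ ?_
    · filter_upwards with n
      have : Measurable (fun t : ℝ => F n ⌊t * √n⌋₊) :=
        (measurable_from_nat (f := F n)).comp (Nat.measurable_floor.comp (measurable_id.mul_const _))
      exact this.aestronglyMeasurable
    · filter_upwards [eventually_ge_atTop 1] with n hn
      filter_upwards with s
      refine (hF n hn _).trans ?_
      rw [mul_assoc, ← Real.exp_add]
      refine mul_le_mul_of_nonneg_left (Real.exp_le_exp.mpr ?_) hA
      have h2 := (Nat.lt_floor_add_one (s * √n)).le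
      have h3 : 1 ≤ √(n : ℝ) := by
        rw [Real.one_le_sqrt]; exact_mod_cast hn
      have h4 : s - 1 ≤ (⌊s * √n⌋₊ : ℝ) / √n := by
        rw [le_div_iff₀ (by linarith)]
        nlinarith
      nlinarith
    · exact (integrableOn_exp_mul_Ioi (by linarith) 0).const_mul _
    · filter_upwards [ae_restrict_mem measurableSet_Ioi] with t ht
      exact hp t ht
  refine h1.congr' ?_
  filter_upwards [eventually_ge_atTop 1] with n hn
  have h3 : 0 < √(n : ℝ) := by
    rw [Real.sqrt_pos]; exact_mod_cast hn
  have h4 := integral_comp_mul_right_Ioi (fun s : ℝ => F n ⌊s⌋₊) 0 h3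
  rw [h4, zero_mul, smul_eq_mul, integral_floor_eq_tsum (F n) A (a / √n) (by positivity) ?_]
  intro k
  refine (hF n hn k).trans (le_of_eq ?_)
  congr 2
  ring

lemma sum_tri (k : ℕ) (c : ℝ) : ∑ j ∈ Finset.range k, ((j : ℝ) + 1) / c = (k : ℝ) * (k + 1) / 2 / c := by
  induction k with
  | zero => simp
  | succ k ih => rw [Finset.sum_range_succ, ih]; push_cast; ring

/-- right products -/
noncomputable def Pp (n k : ℕ) : ℝ := ∏ j ∈ Finset.range k, (1 + ((j : ℝ) + 1) / n)
/-- left products -/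
noncomputable def Pm (n k : ℕ) : ℝ := ∏ j ∈ Finset.range k, (1 - ((j : ℝ) + 1) / n)

lemma Pp_pos (n k : ℕ) : 0 < Pp n k := Finset.prod_pos (fun j _ => by positivity)

lemma Pp_le (n k : ℕ) : Pp n k ≤ Real.exp ((k : ℝ) * (k + 1) / 2 / n) := by
  rw [← sum_tri, Real.exp_sum]
  refine Finset.prod_le_prod (fun j _ => by positivity) (fun j _ => ?_)
  linarith [Real.add_one_le_exp (((j : ℝ) + 1) / n)]

lemma le_Pp (n k : ℕ) (hn : 1 ≤ n) : Real.exp ((k : ℝ) * (k + 1) / 2 / (n + k)) ≤ Pp n k := by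
  rw [← sum_tri, Real.exp_sum]
  refine Finset.prod_le_prod (fun j _ => by positivity) (fun j hj => ?_)
  have hn0 : (0 : ℝ) < n := by exact_mod_cast hn
  have hj' : (j : ℝ) + 1 ≤ k := by exact_mod_cast Finset.mem_range.mp hj
  have hpos : 0 < 1 + ((j : ℝ) + 1) / n := by positivity
  rw [← Real.le_log_iff_exp_le hpos]
  refine le_trans ?_ (Real.one_sub_inv_le_log_of_pos hpos)
  have e : 1 - (1 + ((j : ℝ) + 1) / n)⁻¹ = ((j : ℝ) + 1) / (n + (j + 1)) := by
    field_simp; ring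
  rw [e]
  gcongr

lemma Pm_nonneg (n k : ℕ) (hn : 1 ≤ n) : 0 ≤ Pm n k := by
  have hn0 : (0 : ℝ) < n := by exact_mod_cast hn
  rcases lt_or_ge k n with h | h
  · refine Finset.prod_nonneg (fun j hj => ?_)
    have hj' : (j : ℝ) + 1 ≤ n := by exact_mod_cast (Finset.mem_range.mp hj).trans h
    rw [sub_nonneg, div_le_one hn0]; exact hj'
  · rcases h.eq_or_lt with rfl | h
    · refine Finset.prod_nonneg (fun j hj => ?_)
      have hj' : (j : ℝ) + 1 ≤ n := by exact_mod_cast (Finset.mem_range.mp hj)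
      rw [sub_nonneg, div_le_one hn0]; exact hj'
    · refine le_of_eq (Finset.prod_eq_zero (i := n - 1) (Finset.mem_range.mpr (by omega)) ?_).symm
      rw [Nat.cast_sub hn]; push_cast; field_simp; ring

lemma Pm_zero (n k : ℕ) (hn : 1 ≤ n) (h : n ≤ k) : Pm n k = 0 := by
  have hn0 : (0 : ℝ) < n := by exact_mod_cast hn
  refine (Finset.prod_eq_zero (i := n - 1) (Finset.mem_range.mpr (by omega)) ?_)
  rw [Nat.cast_sub hn]; push_cast; field_simp; ring

lemma Pm_le (n k : ℕ) (hn : 1 ≤ n) : Pm n k ≤ Real.exp (-((k : ℝ) * (k + 1) / 2 / n)) := by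
  have hn0 : (0 : ℝ) < n := by exact_mod_cast hn
  rcases lt_or_ge k n with h | h
  · rw [← sum_tri, ← Finset.sum_neg_distrib, Real.exp_sum]
    refine Finset.prod_le_prod (fun j hj => ?_) (fun j hj => ?_)
    · have hj' : (j : ℝ) + 1 ≤ n := by exact_mod_cast (Finset.mem_range.mp hj).trans h
      rw [sub_nonneg, div_le_one hn0]; exact hj'
    · linarith [Real.add_one_le_exp (-(((j : ℝ) + 1) / n))]
  · rw [Pm_zero n k hn h]; positivity

lemma le_Pm (n k : ℕ) (h : k < n) : Real.exp (-((k : ℝ) * (k + 1) / 2 / (n - k))) ≤ Pm n k := by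
  have hn0 : (0 : ℝ) < n := by exact_mod_cast (by omega : 0 < n)
  have hk : (0 : ℝ) < (n : ℝ) - k := by
    have : (k : ℝ) < n := by exact_mod_cast h
    linarith
  rw [← sum_tri, ← Finset.sum_neg_distrib, Real.exp_sum]
  refine Finset.prod_le_prod (fun j _ => by positivity) (fun j hj => ?_)
  have hj' : (j : ℝ) + 1 ≤ k := by exact_mod_cast Finset.mem_range.mp hj
  have hpos : 0 < 1 - ((j : ℝ) + 1) / n := by
    rw [sub_pos, div_lt_one hn0]; linarith
  have hd : 0 < (n : ℝ) - (j + 1) := by linarith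
  rw [← Real.le_log_iff_exp_le hpos]
  refine le_trans ?_ (Real.one_sub_inv_le_log_of_pos hpos)
  have e : 1 - (1 - ((j : ℝ) + 1) / n)⁻¹ = -(((j : ℝ) + 1) / (n - (j + 1))) := by
    have : (n : ℝ) - (j + 1) ≠ 0 := hd.ne'
    rw [one_sub_div hn0.ne', inv_div]
    field_simp; ring
  rw [e, neg_le_neg_iff]
  gcongr

lemma cw_right (ν : ℝ) (n k : ℕ) (hn : 1 ≤ n) :
    cw ν n (n + k) = cw ν n n * (Pp n k)⁻¹ ^ ν := by
  have hn0 : (0 : ℝ) < n := by exact_mod_cast hn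
  induction k with
  | zero => simp [Pp]
  | succ k ih =>
    have h1 := cw_succ ν n hn0 (n + k)
    rw [one_add_cu _ hn0] at h1
    have e : ((n + k + 1 : ℕ) : ℝ) / n = 1 + ((k : ℝ) + 1) / n := by
      push_cast; field_simp; ring
    rw [e, ih] at h1
    have hpos : 0 < 1 + ((k : ℝ) + 1) / n := by positivity
    have hPk := Pp_pos n k
    have e2 : Pp n (k + 1) = Pp n k * (1 + ((k : ℝ) + 1) / n) := Finset.prod_range_succ _ _
    rw [e2, mul_inv, Real.mul_rpow (by positivity) (by positivity), ← mul_assoc, ← h1,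
      Real.inv_rpow hpos.le]
    have : (1 + ((k : ℝ) + 1) / n) ^ ν ≠ 0 := by positivity
    rw [← add_assoc]
    field_simp

lemma cw_left (ν : ℝ) (n k : ℕ) (hk : k < n) :
    cw ν n (n - 1 - k) = cw ν n n * (Pm n k) ^ ν := by
  have hn0 : (0 : ℝ) < n := by exact_mod_cast (by omega : 0 < n)
  induction k with
  | zero =>
    have h1 := cw_succ ν n hn0 (n - 1)
    rw [one_add_cu _ hn0, Nat.sub_add_cancel (by omega), div_self hn0.ne'] at h1
    simpa [Pm] using h1.symm
  | succ k ih =>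
    have h1 := cw_succ ν n hn0 (n - 1 - (k + 1))
    have e0 : n - 1 - (k + 1) + 1 = n - 1 - k := by omega
    rw [one_add_cu _ hn0, e0, ih (by omega)] at h1
    have e : ((n - 1 - k : ℕ) : ℝ) / n = 1 - ((k : ℝ) + 1) / n := by
      rw [Nat.sub_sub, Nat.cast_sub (by omega)]; push_cast; field_simp; ring
    rw [e] at h1
    have hpos : 0 ≤ 1 - ((k : ℝ) + 1) / n := by
      rw [← e]; positivity
    have e2 : Pm n (k + 1) = Pm n k * (1 - ((k : ℝ) + 1) / n) := Finset.prod_range_succ _ _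
    rw [e2, Real.mul_rpow (Pm_nonneg n k (by omega)) hpos, ← h1]
    ring

lemma Z_split (ν : ℝ) (hν : 0 < ν) (n : ℕ) (hn : 1 ≤ n) :
    cmpZ ((n : ℝ) ^ ν) ν = cw ν n n * (∑' k, (Pp n k)⁻¹ ^ ν + ∑' k, (Pm n k) ^ ν) := by
  have hn0 : (0 : ℝ) < n := by exact_mod_cast hn
  rw [cZ_eq, ← (summable_cw ν n hν hn0).sum_add_tsum_nat_add n, mul_add, add_comm]
  congr 1
  · rw [← tsum_mul_left]
    refine tsum_congr (fun k => ?_)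
    rw [add_comm k n]
    exact cw_right ν n k hn
  · rw [tsum_eq_sum (s := Finset.range n), Finset.mul_sum, ← Finset.sum_range_reflect]
    · exact Finset.sum_congr rfl (fun k hk => cw_left ν n k (Finset.mem_range.mp hk))
    · intro k hk
      rw [Pm_zero n k hn (by simpa using hk), Real.zero_rpow hν.ne']

lemma floor_lims (t : ℝ) (ht : 0 < t) :
    Tendsto (fun n : ℕ => (⌊t * √n⌋₊ : ℝ) / √n) atTop (𝓝 t) ∧
    Tendsto (fun n : ℕ => (√(n : ℝ))⁻¹) atTop (𝓝 0) := by
  have h1 : Tendsto (fun n : ℕ => √(n : ℝ)) atTop atTop :=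
    Real.tendsto_sqrt_atTop.comp tendsto_natCast_atTop_atTop
  exact ⟨(tendsto_nat_floor_mul_div_atTop ht.le).comp h1, tendsto_inv_atTop_zero.comp h1⟩

lemma tri_lim (t : ℝ) (ht : 0 < t) (c : ℝ) :
    Tendsto (fun n : ℕ => ((⌊t * √n⌋₊ : ℝ) * ((⌊t * √n⌋₊ : ℝ) + 1) / 2) / (n + c * (⌊t * √n⌋₊ : ℝ)))
      atTop (𝓝 (t ^ 2 / 2)) := by
  obtain ⟨h1, h2⟩ := floor_lims t ht
  have h3 : Tendsto (fun n : ℕ => ((⌊t * √n⌋₊ : ℝ) / √n * ((⌊t * √n⌋₊ : ℝ) / √n + (√(n : ℝ))⁻¹) / 2) /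
      (1 + c * ((⌊t * √n⌋₊ : ℝ) / √n * (√(n : ℝ))⁻¹))) atTop
      (𝓝 ((t * (t + 0) / 2) / (1 + c * (t * 0)))) := by
    refine ((h1.mul (h1.add h2)).div_const 2).div
      (tendsto_const_nhds.add ((h1.mul h2).const_mul c)) (by simp)
  have e : (t * (t + 0) / 2) / (1 + c * (t * 0)) = t ^ 2 / 2 := by simp; ring
  rw [e] at h3
  refine h3.congr' ?_
  filter_upwards [eventually_ge_atTop 1] with n hn
  have hn0 : (0 : ℝ) < n := by exact_mod_cast hn
  set r := √(n : ℝ) with hr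
  have hr0 : 0 < r := Real.sqrt_pos.mpr hn0
  have hrn : (n : ℝ) = r ^ 2 := (Real.sq_sqrt hn0.le).symm
  rw [hrn]
  set q : ℝ := (⌊t * r⌋₊ : ℝ)
  have e1 : q / r * (q / r + r⁻¹) / 2 = (q * (q + 1) / 2) / r ^ 2 := by field_simp
  have e2 : 1 + c * (q / r * r⁻¹) = (r ^ 2 + c * q) / r ^ 2 := by field_simp
  rw [e1, e2, div_div_div_cancel_right₀ (by positivity)]

lemma right_lim (ν : ℝ) (hν : 0 < ν) (t : ℝ) (ht : 0 < t) :
    Tendsto (fun n : ℕ => (Pp n ⌊t * √n⌋₊)⁻¹ ^ ν) atTop (𝓝 (Real.exp (-(ν / 2) * t ^ 2))) := by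
  have h0 := tri_lim t ht 0
  have h1 := tri_lim t ht 1
  simp only [zero_mul, add_zero, one_mul] at h0 h1
  have key : Tendsto (fun n : ℕ => Pp n ⌊t * √n⌋₊) atTop (𝓝 (Real.exp (t ^ 2 / 2))) := by
    refine tendsto_of_tendsto_of_tendsto_of_le_of_le' ((Real.continuous_exp.tendsto _).comp h1)
      ((Real.continuous_exp.tendsto _).comp h0) ?_ ?_
    · filter_upwards [eventually_ge_atTop 1] with n hn using le_Pp n _ hn
    · filter_upwards with n using Pp_le n _
  have := (key.inv₀ (Real.exp_pos _).ne').rpow_const (p := ν) (Or.inr hν.le)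
  convert this using 2
  rw [← Real.exp_neg, ← Real.exp_mul]
  congr 1; ring

lemma left_lim (ν : ℝ) (hν : 0 < ν) (t : ℝ) (ht : 0 < t) :
    Tendsto (fun n : ℕ => (Pm n ⌊t * √n⌋₊) ^ ν) atTop (𝓝 (Real.exp (-(ν / 2) * t ^ 2))) := by
  have h0 := tri_lim t ht 0
  have h1 := tri_lim t ht (-1)
  simp only [zero_mul, add_zero, neg_one_mul, ← sub_eq_add_neg] at h0 h1
  have key : Tendsto (fun n : ℕ => Pm n ⌊t * √n⌋₊) atTop (𝓝 (Real.exp (-(t ^ 2 / 2)))) := by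
    refine tendsto_of_tendsto_of_tendsto_of_le_of_le' ((Real.continuous_exp.tendsto _).comp h1.neg)
      ((Real.continuous_exp.tendsto _).comp h0.neg) ?_ ?_
    · obtain ⟨g1, g2⟩ := floor_lims t ht
      have g3 := g1.mul g2
      rw [mul_zero] at g3
      filter_upwards [eventually_ge_atTop 1, g3.eventually_lt_const one_pos] with n hn hlt
      refine le_Pm n _ ?_
      have hn0 : (0 : ℝ) < n := by exact_mod_cast hn
      rw [div_mul_eq_mul_div, ← div_eq_mul_inv, div_div, Real.mul_self_sqrt hn0.le,
        div_lt_one hn0] at hlt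
      exact_mod_cast hlt
    · filter_upwards [eventually_ge_atTop 1] with n hn using Pm_le n _ hn
  have := key.rpow_const (p := ν) (Or.inr hν.le)
  convert this using 2
  rw [← Real.exp_mul]
  congr 1; ring

lemma right_bd (ν : ℝ) (hν : 0 < ν) (n : ℕ) (hn : 1 ≤ n) (k : ℕ) :
    |(Pp n k)⁻¹ ^ ν| ≤ Real.exp (ν / 2) * Real.exp (-(ν / 2) * (k / √n)) := by
  have hn0 : (0 : ℝ) < n := by exact_mod_cast hn
  have hPk := Pp_pos n k
  rw [abs_of_nonneg (by positivity), ← Real.exp_add]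
  have h1 : (Pp n k)⁻¹ ≤ Real.exp (-((k : ℝ) * (k + 1) / 2 / (n + k))) := by
    rw [Real.exp_neg]
    exact inv_anti₀ (Real.exp_pos _) (le_Pp n k hn)
  refine (Real.rpow_le_rpow (by positivity) h1 hν.le).trans ?_
  rw [← Real.exp_mul, Real.exp_le_exp]
  set r := √(n : ℝ) with hr
  have hr1 : 1 ≤ r := by rw [hr, Real.one_le_sqrt]; exact_mod_cast hn
  have hr0 : 0 < r := by linarith
  have hrn : (n : ℝ) = r ^ 2 := (Real.sq_sqrt hn0.le).symm
  have hs0 : (0 : ℝ) ≤ k / r := by positivity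
  have h2 : (k / r - 1) ≤ (k : ℝ) * (k + 1) / (n + k) := by
    rw [le_div_iff₀ (by positivity), hrn]
    obtain ⟨s, hs⟩ : ∃ s : ℝ, s = k / r := ⟨_, rfl⟩
    have hk : (k : ℝ) = s * r := by rw [hs]; field_simp
    rw [← hs] at hs0 ⊢
    rw [hk]
    have h3 : 0 ≤ (r - 1) * (s ^ 2 - s + 1) :=
      mul_nonneg (by linarith) (by nlinarith [sq_nonneg (s - 1)])
    have h4 : 0 ≤ r * ((r - 1) * (s ^ 2 - s + 1) + 1) := by positivity
    nlinarith [mul_nonneg hs0 hr0.le]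
  have h5 : (k : ℝ) * (k + 1) / 2 / (n + k) = ((k : ℝ) * (k + 1) / (n + k)) / 2 := by ring
  rw [h5]
  nlinarith

lemma left_bd (ν : ℝ) (hν : 0 < ν) (n : ℕ) (hn : 1 ≤ n) (k : ℕ) :
    |(Pm n k) ^ ν| ≤ Real.exp (ν / 2) * Real.exp (-(ν / 2) * (k / √n)) := by
  have hn0 : (0 : ℝ) < n := by exact_mod_cast hn
  have hPk := Pm_nonneg n k hn
  rw [abs_of_nonneg (by positivity), ← Real.exp_add]
  refine (Real.rpow_le_rpow hPk (Pm_le n k hn) hν.le).trans ?_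
  rw [← Real.exp_mul, Real.exp_le_exp]
  set r := √(n : ℝ) with hr
  have hr0 : 0 < r := Real.sqrt_pos.mpr hn0
  have hrn : (n : ℝ) = r ^ 2 := (Real.sq_sqrt hn0.le).symm
  have h2 : (k / r - 1) ≤ (k : ℝ) * (k + 1) / n := by
    have e : (k : ℝ) * (k + 1) / n = (k / r) ^ 2 + k / n := by rw [hrn]; field_simp
    rw [e]
    have : (0 : ℝ) ≤ k / n := by positivity
    nlinarith [sq_nonneg ((k : ℝ) / r - 1), sq_nonneg ((k : ℝ) / r)]
  have h5 : (k : ℝ) * (k + 1) / 2 / n = ((k : ℝ) * (k + 1) / n) / 2 := by ring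
  rw [h5]
  nlinarith

lemma leading (ν : ℝ) (hν : 0 < ν) : Tendsto (fun n : ℕ => Real.log (cmpZ ((n : ℝ) ^ ν) ν) - ν * n
    + (ν - 1) / 2 * Real.log n) atTop
    (𝓝 (-Real.log ((2 * Real.pi) ^ ((ν - 1) / 2) * Real.sqrt ν))) := by
  have hpi := Real.pi_pos
  have h1 := riemann_limit (fun n k => (Pp n k)⁻¹ ^ ν) _ _ (ν / 2) (by positivity)
    (right_bd ν hν) (right_lim ν hν)
  have h2 := riemann_limit (fun n k => (Pm n k) ^ ν) _ _ (ν / 2) (by positivity)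
    (left_bd ν hν) (left_lim ν hν)
  rw [integral_gaussian_Ioi] at h1 h2
  have h3 := h1.add h2
  have hs0 : 0 < √(Real.pi / (ν / 2)) := Real.sqrt_pos.mpr (by positivity)
  rw [add_halves] at h3
  have h4 := h3.log hs0.ne'
  have h5 := Stirling.tendsto_stirlingSeq_sqrt_pi.log (Real.sqrt_pos.mpr hpi).ne'
  have h6 := (h4.sub (h5.const_mul ν)).sub_const (ν / 2 * Real.log 2)
  have elim : Real.log √(Real.pi / (ν / 2)) - ν * Real.log √Real.pi - ν / 2 * Real.log 2
      = -Real.log ((2 * Real.pi) ^ ((ν - 1) / 2) * √ν) := by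
    rw [Real.log_mul (by positivity) (by positivity), Real.log_rpow (by positivity),
      Real.log_sqrt (by positivity), Real.log_sqrt (by positivity), Real.log_sqrt (by positivity),
      Real.log_div (by positivity) (by positivity), Real.log_div (by positivity) (by positivity),
      Real.log_mul (by positivity) (by positivity)]
    ring
  rw [elim] at h6
  refine h6.congr' ?_
  filter_upwards [eventually_ge_atTop 1] with n hn
  have hn0 : (0 : ℝ) < n := by exact_mod_cast hn
  have hZ := cZ_pos ν n hν hn0
  have hsplit := Z_split ν hν n hn
  have hw := cw_pos ν n hn0 n
  have hS : ∑' k, (Pp n k)⁻¹ ^ ν + ∑' k, (Pm n k) ^ ν = cmpZ ((n : ℝ) ^ ν) ν / cw ν n n := by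
    rw [hsplit]; field_simp
  rw [← mul_add, hS, Real.log_mul (by positivity) (by positivity),
    Real.log_div (by positivity) (by positivity), Real.log_inv, Real.log_sqrt hn0.le,
    Stirling.log_stirlingSeq_formula]
  have hf : (0 : ℝ) < (n.factorial : ℝ) := by positivity
  have e : Real.log (cw ν n n) = ν * (n * Real.log n - Real.log (n.factorial)) := by
    unfold cw
    rw [Real.log_div (by positivity) (by positivity), Real.log_pow, Real.log_rpow hn0,
      Real.log_rpow hf]
    ring
  rw [e, Real.log_mul (by positivity) (by positivity), Real.log_div (by positivity) (by positivity),
    Real.log_exp]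
  ring

lemma hasDerivAt_cmpZ (ν : ℝ) (hν : 0 < ν) (lam : ℝ) (hl : 0 < lam) :
    HasDerivAt (fun z => cmpZ z ν)
      (lam⁻¹ * ∑' i : ℕ, (i : ℝ) * (lam ^ i / (i.factorial : ℝ) ^ ν)) lam := by
  have hid : (fun i : ℕ => (i : ℝ)) =O[atTop] fun i : ℕ => (i : ℝ) ^ 1 := by
    simpa using isBigO_refl _ _
  have hu : Summable (fun i : ℕ => (2 * lam)⁻¹ * ((i : ℝ) * ((2 * lam) ^ i / (i.factorial : ℝ) ^ ν))) :=
    (summable_pow_mul ν hν (2 * lam) (by positivity) 1 _ hid).mul_left _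
  have h := hasDerivAt_tsum_of_isPreconnected (t := Set.Ioo 0 (2 * lam)) (y₀ := lam) (y := lam)
    (g := fun (i : ℕ) z => z ^ i / (i.factorial : ℝ) ^ ν)
    (g' := fun (i : ℕ) z => ((i : ℝ) * z ^ (i - 1)) / (i.factorial : ℝ) ^ ν) hu isOpen_Ioo
    isPreconnected_Ioo (fun n y _ => (hasDerivAt_pow n y).div_const _) ?_
    ⟨hl, by linarith⟩ (summable_base ν hν lam hl) ⟨hl, by linarith⟩
  · refine h.congr_deriv ?_
    rw [← tsum_mul_left]
    refine tsum_congr (fun i => ?_)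
    rcases i with _ | i
    · simp
    · rw [Nat.add_sub_cancel, pow_succ]; field_simp
  · intro n y hy
    have hy0 : 0 < y := hy.1
    rw [Real.norm_of_nonneg (by positivity)]
    rcases n with _ | i
    · simp
    · rw [Nat.add_sub_cancel, pow_succ]
      have : y ^ i ≤ (2 * lam) ^ i := pow_le_pow_left₀ hy0.le hy.2.le i
      have e : (2 * lam)⁻¹ * (((i + 1 : ℕ) : ℝ) * ((2 * lam) ^ i * (2 * lam) / ((i + 1).factorial : ℝ) ^ ν))
        = ((i + 1 : ℕ) : ℝ) * (2 * lam) ^ i / ((i + 1).factorial : ℝ) ^ ν := by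
        field_simp
      rw [e]
      gcongr

lemma hasDerivAt_logZ (ν : ℝ) (hν : 0 < ν) (x : ℝ) (hx : 0 < x) :
    HasDerivAt (fun x => Real.log (cmpZ (x ^ ν) ν)) (ν * (1 + cm ν x 1)) x := by
  have hid : (fun i : ℕ => (i : ℝ)) =O[atTop] fun i : ℕ => (i : ℝ) ^ 1 := by
    simpa using isBigO_refl _ _
  have hZ := cZ_pos ν x hν hx
  have hxν : 0 < x ^ ν := by positivity
  have h1 := hasDerivAt_cmpZ ν hν (x ^ ν) hxν
  have h2 : HasDerivAt (fun x : ℝ => x ^ ν) (ν * x ^ (ν - 1)) x :=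
    Real.hasDerivAt_rpow_const (Or.inl hx.ne')
  have h12 := HasDerivAt.comp (h₂ := fun z => cmpZ z ν) (h := fun x : ℝ => x ^ ν) x h1 h2
  simp only [Function.comp_def] at h12
  have h3 := h12.log hZ.ne'
  refine h3.congr_deriv ?_
  have hs : Summable (fun i : ℕ => (i : ℝ) * cw ν x i) :=
    summable_pow_mul ν hν (x ^ ν) hxν 1 _ hid
  have e : cm ν x 1 = (x⁻¹ * ∑' i : ℕ, (i : ℝ) * cw ν x i - cmpZ (x ^ ν) ν) / cmpZ (x ^ ν) ν := by
    unfold cm cE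
    congr 1
    rw [cZ_eq, ← tsum_mul_left, ← (hs.mul_left x⁻¹).tsum_sub (summable_cw ν x hν hx)]
    refine tsum_congr (fun i => ?_)
    unfold cu
    field_simp
  rw [e]
  change (x ^ ν)⁻¹ * (∑' i : ℕ, (i : ℝ) * cw ν x i) * (ν * x ^ (ν - 1)) / cmpZ (x ^ ν) ν = _
  rw [Real.rpow_sub_one hx.ne']
  field_simp
  ring

lemma tail_bound (f f' : ℝ → ℝ) (K D X : ℝ) (hX : 0 < X)
    (hf : ∀ x, X ≤ x → HasDerivAt f (f' x) x) (hD : 0 ≤ D)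
    (hb : ∀ x, X ≤ x → |f' x| ≤ D * (x⁻¹) ^ 4)
    (hlim : Tendsto (fun n : ℕ => f n) atTop (𝓝 K)) (x : ℝ) (hx : X ≤ x) :
    |f x - K| ≤ D * (x⁻¹) ^ 3 := by
  have hd : ∀ c x : ℝ, X ≤ x → HasDerivAt (fun x => f x + c * (x⁻¹) ^ 3)
      (f' x - 3 * c * (x⁻¹) ^ 4) x := by
    intro c x hx
    have hx0 : 0 < x := hX.trans_le hx
    have := (hf x hx).add (((hasDerivAt_inv hx0.ne').pow 3).const_mul c)
    refine this.congr_deriv ?_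
    norm_num
    field_simp
    ring
  have hlim0 : ∀ c : ℝ, Tendsto (fun n : ℕ => f n + c * ((n : ℝ)⁻¹) ^ 3) atTop (𝓝 K) := by
    intro c
    have : Tendsto (fun n : ℕ => c * ((n : ℝ)⁻¹) ^ 3) atTop (𝓝 (c * 0 ^ 3)) :=
      ((tendsto_inv_atTop_nhds_zero_nat).pow 3).const_mul c
    simpa using hlim.add this
  have anti : AntitoneOn (fun x => f x + D / 3 * (x⁻¹) ^ 3) (Set.Ici X) := by
    refine antitoneOn_of_deriv_nonpos (convex_Ici X)
      (fun y hy => (hd (D / 3) y hy).continuousAt.continuousWithinAt)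
      (fun y hy => (hd (D / 3) y (interior_subset hy)).differentiableAt.differentiableWithinAt)
      (fun y hy => ?_)
    have hy' : X ≤ y := interior_subset hy
    rw [(hd (D / 3) y hy').deriv]
    have := (abs_le.mp (hb y hy')).2
    linarith
  have mono : MonotoneOn (fun x => f x + (-(D / 3)) * (x⁻¹) ^ 3) (Set.Ici X) := by
    refine monotoneOn_of_deriv_nonneg (convex_Ici X)
      (fun y hy => (hd (-(D / 3)) y hy).continuousAt.continuousWithinAt)
      (fun y hy => (hd (-(D / 3)) y (interior_subset hy)).differentiableAt.differentiableWithinAt)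
      (fun y hy => ?_)
    have hy' : X ≤ y := interior_subset hy
    rw [(hd (-(D / 3)) y hy').deriv]
    have := (abs_le.mp (hb y hy')).1
    linarith
  have ev : ∀ᶠ n : ℕ in atTop, x ≤ n := tendsto_natCast_atTop_atTop.eventually_ge_atTop x
  have h1 : K ≤ f x + D / 3 * (x⁻¹) ^ 3 := by
    refine le_of_tendsto (hlim0 (D / 3)) ?_
    filter_upwards [ev] with n hn
    exact anti hx (Set.mem_Ici.mpr (hx.trans hn)) hn
  have h2 : f x + (-(D / 3)) * (x⁻¹) ^ 3 ≤ K := by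
    refine ge_of_tendsto (hlim0 (-(D / 3))) ?_
    filter_upwards [ev] with n hn
    exact mono hx (Set.mem_Ici.mpr (hx.trans hn)) hn
  have hx0 : 0 < x := hX.trans_le hx
  have h3 : 0 ≤ D * (x⁻¹) ^ 3 := by positivity
  rw [abs_le]
  constructor <;> linarith

/-- Asymptotic expansion of `ln Z(λ,ν)`:
`ln Z(λ,ν) = ν λ^{1/ν} − ((ν−1)/(2ν)) ln λ − ln((2π)^{(ν−1)/2} √ν)
  + ((ν²−1)/(24ν)) λ^{−1/ν} + ((ν²−1)/(48ν²)) λ^{−2/ν} + O(λ^{−3/ν})` as `λ → ∞`. -/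
theorem log_cmpZ_asymptotic (ν : ℝ) (hν : 0 < ν) :
    ∃ C > (0 : ℝ), ∃ Λ > (0 : ℝ), ∀ lam : ℝ, lam ≥ Λ →
      |Real.log (cmpZ lam ν) - ν * lam ^ (1 / ν) + ((ν - 1) / (2 * ν)) * Real.log lam +
          Real.log ((2 * Real.pi) ^ ((ν - 1) / 2) * Real.sqrt ν) -
          ((ν ^ 2 - 1) / (24 * ν)) * lam ^ (-(1 / ν)) -
          ((ν ^ 2 - 1) / (48 * ν ^ 2)) * lam ^ (-(2 / ν))|
        ≤ C * lam ^ (-(3 / ν)) := by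
  have hν0 : ν ≠ 0 := hν.ne'
  obtain ⟨C, hC, hb⟩ := (first_moment ν hν).exists_pos
  rw [isBigOWith_iff, eventually_atTop] at hb
  obtain ⟨X₀, hb⟩ := hb
  set X := max X₀ 1 with hXdef
  have hX : 0 < X := lt_of_lt_of_le one_pos (le_max_right _ _)
  set c1 : ℝ := (ν ^ 2 - 1) / (24 * ν) with hc1
  set c2 : ℝ := (ν ^ 2 - 1) / (48 * ν ^ 2) with hc2
  set f : ℝ → ℝ := fun x => Real.log (cmpZ (x ^ ν) ν) - ν * x + (ν - 1) / 2 * Real.log x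
    - c1 * x⁻¹ - c2 * (x⁻¹) ^ 2 with hfdef
  set f' : ℝ → ℝ := fun x => ν * (cm ν x 1 - (-(ν - 1) / (2 * ν) * (x⁻¹)^1
   - (ν ^ 2 - 1) / (24 * ν ^ 2) * (x⁻¹) ^ 2 - (ν ^ 2 - 1) / (24 * ν ^ 3) * (x⁻¹) ^ 3)) with hf'def
  have hder : ∀ x, X ≤ x → HasDerivAt f (f' x) x := by
    intro x hx
    have hx0 : 0 < x := hX.trans_le hx
    have := ((((hasDerivAt_logZ ν hν x hx0).sub ((hasDerivAt_id x).const_mul ν)).add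
      ((Real.hasDerivAt_log hx0.ne').const_mul ((ν - 1) / 2))).sub
      ((hasDerivAt_inv hx0.ne').const_mul c1)).sub
      (((hasDerivAt_inv hx0.ne').pow 2).const_mul c2)
    refine this.congr_deriv ?_
    simp only [hf'def, hc1, hc2]
    norm_num
    field_simp
    ring
  have hbd : ∀ x, X ≤ x → |f' x| ≤ (ν * C) * (x⁻¹) ^ 4 := by
    intro x hx
    have hx0 : 0 < x := hX.trans_le hx
    have h := hb x ((le_max_left _ _).trans hx)
    rw [Real.norm_eq_abs, Real.norm_of_nonneg (by positivity)] at h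
    simp only [hf'def]
    rw [abs_mul, abs_of_pos hν, mul_assoc]
    exact mul_le_mul_of_nonneg_left h hν.le
  have hlim : Tendsto (fun n : ℕ => f n) atTop
      (𝓝 (-Real.log ((2 * Real.pi) ^ ((ν - 1) / 2) * Real.sqrt ν))) := by
    have h1 : Tendsto (fun n : ℕ => c1 * (n : ℝ)⁻¹) atTop (𝓝 (c1 * 0)) :=
      (tendsto_inv_atTop_nhds_zero_nat).const_mul c1
    have h2 : Tendsto (fun n : ℕ => c2 * ((n : ℝ)⁻¹) ^ 2) atTop (𝓝 (c2 * 0 ^ 2)) :=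
      ((tendsto_inv_atTop_nhds_zero_nat).pow 2).const_mul c2
    have h3 := ((leading ν hν).sub h1).sub h2
    rw [mul_zero, zero_pow two_ne_zero, mul_zero, sub_zero, sub_zero] at h3
    exact h3
  refine ⟨ν * C, by positivity, X ^ ν, by positivity, fun lam hlam => ?_⟩
  have hl0 : 0 < lam := lt_of_lt_of_le (by positivity) hlam
  set x := lam ^ (1 / ν) with hxdef
  have hx0 : 0 < x := by positivity
  have hxν : x ^ ν = lam := by
    rw [hxdef, ← Real.rpow_mul hl0.le, one_div, inv_mul_cancel₀ hν0, Real.rpow_one]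
  have hXx : X ≤ x := by
    have := Real.rpow_le_rpow (by positivity) hlam (by positivity : 0 ≤ 1 / ν)
    rwa [← Real.rpow_mul hX.le, mul_one_div, div_self hν0, Real.rpow_one] at this
  have key := tail_bound f f' _ (ν * C) X hX hder (by positivity) hbd hlim x hXx
  have e1 : lam ^ (-(1 / ν)) = x⁻¹ := by rw [Real.rpow_neg hl0.le]
  have e2 : lam ^ (-(2 / ν)) = (x⁻¹) ^ 2 := by
    rw [hxdef, ← Real.rpow_neg hl0.le, ← Real.rpow_natCast, ← Real.rpow_mul hl0.le]
    congr 1; push_cast; ring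
  have e3 : lam ^ (-(3 / ν)) = (x⁻¹) ^ 3 := by
    rw [hxdef, ← Real.rpow_neg hl0.le, ← Real.rpow_natCast, ← Real.rpow_mul hl0.le]
    congr 1; push_cast; ring
  have e4 : Real.log lam = ν * Real.log x := by
    rw [← hxν, Real.log_rpow hx0]
  rw [e1, e2, e3, e4]
  refine le_of_eq_of_le ?_ key
  congr 1
  simp only [hfdef, hxν]
  field_simp
  ring
end

section
/- Fix ν > 0, and let m(λ,ν) = (1/Z(λ,ν)) · Σ_{j=0}^∞ j·λ^j/(j!)^ν denote the mean of the CMP(λ,ν) distribution. Then as λ → ∞, m(λ,ν) = λ^(1/ν) − (ν−1)/(2ν) − ((ν²−1)/(24ν²))·λ^(−1/ν) − ((ν²−1)/(24ν³))·λ^(−2/ν) + O(λ^(−3/ν)). Precisely: there exist constants C > 0 and Λ > 0 (depending only on ν) such that for all λ ≥ Λ, |m(λ,ν) − λ^(1/ν) + (ν−1)/(2ν) + ((ν²−1)/(24ν²))·λ^(−1/ν) + ((ν²−1)/(24ν³))·λ^(−2/ν)| ≤ C·λ^(−3/ν). -/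
open scoped BigOperators

/-- The mean of the `CMP(λ,ν)` distribution:
`m(λ,ν) = (1/Z(λ,ν)) ∑_{j=0}^∞ j λ^j/(j!)^ν`. -/
noncomputable def cmpMean (lam nu : ℝ) : ℝ :=
  (∑' j : ℕ, (j : ℝ) * lam ^ j / (j.factorial : ℝ) ^ nu) / cmpZ lam nu

namespace CMPAux

open Filter Topology Asymptotics Finset

/-- unnormalised weights, `lam = ε^(-ν)` -/
noncomputable def wt (ν ε : ℝ) (j : ℕ) : ℝ := (ε ^ (-ν)) ^ j / (j.factorial : ℝ) ^ ν

noncomputable def pr (ν ε : ℝ) (j : ℕ) : ℝ := wt ν ε j / ∑' i, wt ν ε i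

noncomputable def tt (ε : ℝ) (j : ℕ) : ℝ := ε * j - 1

noncomputable def MM (ν : ℝ) (k : ℕ) (ε : ℝ) : ℝ := ∑' j, tt ε j ^ k * pr ν ε j

variable {ν ε : ℝ}

lemma wt_pos (hε : 0 < ε) (j : ℕ) : 0 < wt ν ε j := by
  unfold wt
  have := Nat.factorial_pos j
  positivity

lemma wt_succ (hε : 0 < ε) (j : ℕ) :
    (ε * ((j : ℝ) + 1)) ^ ν * wt ν ε (j + 1) = wt ν ε j := by
  unfold wt
  have hf : (0 : ℝ) < j.factorial := by exact_mod_cast Nat.factorial_pos j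
  have hj : (0 : ℝ) < (j : ℝ) + 1 := by positivity
  rw [Nat.factorial_succ]
  push_cast
  rw [Real.mul_rpow hε.le hj.le, Real.mul_rpow hj.le hf.le, pow_succ, Real.rpow_neg hε.le]
  have h1 : 0 < ε ^ ν := by positivity
  have h2 : 0 < ((j : ℝ) + 1) ^ ν := by positivity
  have h3 : 0 < (j.factorial : ℝ) ^ ν := by positivity
  field_simp

lemma summable_pow_wt (hν : 0 < ν) (hε : 0 < ε) (n : ℕ) :
    Summable (fun j : ℕ => ((j : ℝ) + 1) ^ n * wt ν ε j) := by
  refine summable_of_ratio_test_tendsto_lt_one (l := 0) one_pos ?_ ?_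
  · refine Eventually.of_forall fun j => ?_
    have := wt_pos (ν := ν) hε j
    positivity
  · have key : ∀ j : ℕ, ‖((((j + 1 : ℕ) : ℝ)) + 1) ^ n * wt ν ε (j + 1)‖ /
        ‖((j : ℝ) + 1) ^ n * wt ν ε j‖ =
        (1 + 1 / ((j : ℝ) + 1)) ^ n * ((ε * ((j : ℝ) + 1)) ^ ν)⁻¹ := by
      intro j
      have h0 := wt_pos (ν := ν) hε (j + 1)
      have h1 := wt_pos (ν := ν) hε j
      have hj : (0 : ℝ) < (j : ℝ) + 1 := by positivity
      have h2 : 0 < (ε * ((j : ℝ) + 1)) ^ ν := by positivity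
      rw [Real.norm_of_nonneg (by positivity), Real.norm_of_nonneg (by positivity),
        ← wt_succ hε j]
      have h3 : (1 + 1 / ((j : ℝ) + 1)) = ((((j + 1 : ℕ) : ℝ)) + 1) / ((j : ℝ) + 1) := by
        push_cast; field_simp
      rw [h3, div_pow]
      field_simp
    simp_rw [key]
    have hA : Tendsto (fun j : ℕ => (1 + 1 / ((j : ℝ) + 1)) ^ n) atTop (𝓝 ((1 + 0) ^ n)) :=
      (tendsto_one_div_add_atTop_nhds_zero_nat.const_add 1).pow n
    have hB : Tendsto (fun j : ℕ => ((ε * ((j : ℝ) + 1)) ^ ν)⁻¹) atTop (𝓝 0) := by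
      refine tendsto_inv_atTop_zero.comp ((tendsto_rpow_atTop hν).comp ?_)
      exact (tendsto_natCast_atTop_atTop.atTop_add tendsto_const_nhds).const_mul_atTop hε
    simpa using hA.mul hB

lemma summable_wt (hν : 0 < ν) (hε : 0 < ε) : Summable (wt ν ε) := by
  simpa using summable_pow_wt hν hε 0

lemma Z_pos (hν : 0 < ν) (hε : 0 < ε) : 0 < ∑' i, wt ν ε i :=
  (summable_wt hν hε).tsum_pos (fun j => (wt_pos hε j).le) 0 (wt_pos hε 0)

lemma pr_nonneg (hν : 0 < ν) (hε : 0 < ε) (j : ℕ) : 0 ≤ pr ν ε j :=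
  div_nonneg (wt_pos hε j).le (Z_pos hν hε).le

lemma pr_succ (hε : 0 < ε) (j : ℕ) :
    (1 + tt ε (j + 1)) ^ ν * pr ν ε (j + 1) = pr ν ε j := by
  unfold pr
  rw [← wt_succ hε j, mul_div_assoc]
  congr 2
  unfold tt
  push_cast
  ring

lemma hasSum_M (hν : 0 < ν) (hε : 0 < ε) (k : ℕ) :
    HasSum (fun j => tt ε j ^ k * pr ν ε j) (MM ν k ε) := by
  apply Summable.hasSum
  have h := ((summable_pow_wt hν hε k).mul_left ((ε + 1) ^ k)).div_const (∑' i, wt ν ε i)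
  refine h.of_norm_bounded fun j => ?_
  rw [norm_mul, Real.norm_of_nonneg (pr_nonneg hν hε j), norm_pow, Real.norm_eq_abs]
  unfold pr
  rw [← mul_assoc, mul_div_assoc, ← mul_pow]
  refine mul_le_mul_of_nonneg_right (pow_le_pow_left₀ (abs_nonneg _) ?_ k) (pr_nonneg hν hε j)
  unfold tt
  have hj : (0 : ℝ) ≤ j := by positivity
  rw [abs_le]
  constructor <;> nlinarith [mul_nonneg hε.le hj]

lemma M_zero (hν : 0 < ν) (hε : 0 < ε) : MM ν 0 ε = 1 := by
  unfold MM pr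
  simp only [pow_zero, one_mul]
  rw [tsum_div_const, div_self (Z_pos hν hε).ne']

lemma hasSum_congr_fun {f g : ℕ → ℝ} {a : ℝ} (h : ∀ j, f j = g j) : HasSum f a ↔ HasSum g a := by
  rw [funext h]

lemma hasSum_shift (hν : 0 < ν) (hε : 0 < ε) (k : ℕ) :
    HasSum (fun j => (tt ε j + ε) ^ k * pr ν ε j)
      (∑ i ∈ range (k + 1), MM ν i ε * (ε ^ (k - i) * (k.choose i))) := by
  have h := hasSum_sum (s := range (k + 1)) (fun i _ =>
    (hasSum_M hν hε i).mul_right (ε ^ (k - i) * (k.choose i : ℝ)))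
  refine (hasSum_congr_fun fun j => ?_).mpr h
  rw [add_pow, Finset.sum_mul]
  refine Finset.sum_congr rfl fun i _ => ?_
  ring

lemma stein (hν : 0 < ν) (hε : 0 < ε) (g : ℝ → ℝ) (a : ℝ)
    (h : HasSum (fun j => g (tt ε j + ε) * pr ν ε j) a) :
    HasSum (fun j => (1 + tt ε j) ^ ν * g (tt ε j) * pr ν ε j) a := by
  rw [← hasSum_nat_add_iff' 1]
  simp only [Finset.sum_range_one]
  have h0 : (1 + tt ε 0) ^ ν = 0 := by
    simp [tt, Real.zero_rpow hν.ne']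
  rw [h0, zero_mul, zero_mul, sub_zero]
  refine (hasSum_congr_fun fun j => ?_).mpr h
  rw [mul_right_comm, pr_succ hε, mul_comm]
  congr 2
  unfold tt
  push_cast
  ring

lemma tt_ge (hε : 0 < ε) (j : ℕ) : -1 ≤ tt ε j := by
  unfold tt
  have : 0 ≤ ε * j := by positivity
  linarith

lemma coercive (hν : 0 < ν) {t : ℝ} (ht : -1 ≤ t) :
    min 1 ν * t ^ 2 ≤ t * (2 + t) * ((1 + t) ^ ν - 1) := by
  rcases le_total 0 t with h | h
  · have h1 := one_add_mul_self_le_rpow_one_add ht (p := 1 + ν) (by linarith)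
    rw [Real.rpow_add (by linarith), Real.rpow_one] at h1
    have h2 : 1 ≤ (1 + t) ^ ν := Real.one_le_rpow (by linarith) hν.le
    have h3 : min 1 ν ≤ ν := min_le_right _ _
    have h4 : ν * t ≤ (2 + t) * ((1 + t) ^ ν - 1) := by nlinarith
    nlinarith [mul_le_mul_of_nonneg_left h4 h, mul_nonneg (sub_nonneg.2 h3) (sq_nonneg t)]
  · have h1 : (1 + t) ^ ν ≤ 1 + min 1 ν * t := by
      rcases le_total ν 1 with h' | h'
      · rw [min_eq_right h']
        exact rpow_one_add_le_one_add_mul_self ht hν.le h'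
      · rw [min_eq_left h', one_mul]
        rcases ht.eq_or_lt with rfl | ht
        · simp [Real.zero_rpow hν.ne']
        · calc (1 + t) ^ ν ≤ (1 + t) ^ (1 : ℝ) :=
                Real.rpow_le_rpow_of_exponent_ge (by linarith) (by linarith) h'
            _ = 1 + t := Real.rpow_one _
    have h5 : 0 < min 1 ν := lt_min one_pos hν
    have h2 : min 1 ν * (-t) ≤ 1 - (1 + t) ^ ν := by linarith
    have h3 : 0 ≤ min 1 ν * (-t) := mul_nonneg h5.le (by linarith)
    have h4 : min 1 ν * (-t) ≤ (2 + t) * (1 - (1 + t) ^ ν) := by nlinarith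
    nlinarith [mul_le_mul_of_nonneg_left h4 (neg_nonneg.2 h)]

lemma pow_diff (hε : 0 < ε) (t : ℝ) (n : ℕ) :
    (t + ε) ^ (n + 1) - t ^ (n + 1) ≤ ε * ((n + 1) * 2 ^ n * (|t| ^ n + ε ^ n)) := by
  have h := (le_abs_self _).trans (abs_pow_sub_pow_le (a := t + ε) (b := t) (n := n + 1))
  refine h.trans ?_
  have e : |t + ε - t| = ε := by rw [add_sub_cancel_left, abs_of_pos hε]
  rw [e, mul_assoc, Nat.add_sub_cancel]
  push_cast
  have h1 : max |t + ε| |t| ≤ |t| + ε := by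
    refine max_le ((abs_add_le _ _).trans_eq (by rw [abs_of_pos hε])) (by linarith)
  have h2 : max |t + ε| |t| ^ n ≤ (|t| + ε) ^ n := pow_le_pow_left₀ (by positivity) h1 n
  have h3 : (|t| + ε) ^ n ≤ 2 ^ n * (|t| ^ n + ε ^ n) := by
    refine (add_pow_le (abs_nonneg t) hε.le n).trans ?_
    gcongr
    · norm_num
    · omega
  have := h2.trans h3
  rw [mul_assoc]
  gcongr

lemma moment_step (hν : 0 < ν) (k : ℕ) : ∃ A > 0, ∀ ε : ℝ, 0 < ε → ε ≤ 1 →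
    min 1 ν * MM ν (2 * k + 2) ε ≤ A * ε * (MM ν (2 * k) ε + ε ^ k + MM ν (2 * k + 2) ε) := by
  refine ⟨2 * (((2 * k : ℕ) + 1) * 2 ^ (2 * k)) + ((2 * k + 1 : ℕ) + 1) * 2 ^ (2 * k + 1),
    by positivity, ?_⟩
  set A1 : ℝ := ((2 * k : ℕ) + 1) * 2 ^ (2 * k) with hA1
  set A2 : ℝ := ((2 * k + 1 : ℕ) + 1) * 2 ^ (2 * k + 1) with hA2
  have hA1p : 0 < A1 := by positivity
  have hA2p : 0 < A2 := by positivity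
  intro ε hε hε1
  have hs : HasSum (fun j => (2 * (tt ε j + ε) ^ (2 * k + 1) + (tt ε j + ε) ^ (2 * k + 2))
      * pr ν ε j) (2 * (∑ i ∈ range (2 * k + 1 + 1),
        MM ν i ε * (ε ^ (2 * k + 1 - i) * ((2 * k + 1).choose i))) +
        (∑ i ∈ range (2 * k + 2 + 1),
        MM ν i ε * (ε ^ (2 * k + 2 - i) * ((2 * k + 2).choose i)))) := by
    have := ((hasSum_shift hν hε (2 * k + 1)).mul_left 2).add (hasSum_shift hν hε (2 * k + 2))
    refine (hasSum_congr_fun fun j => ?_).mpr this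
    ring
  have hst := stein hν hε (fun t => 2 * t ^ (2 * k + 1) + t ^ (2 * k + 2)) _ hs
  have hG : HasSum (fun j => (2 * tt ε j ^ (2 * k + 1) + tt ε j ^ (2 * k + 2))
      * pr ν ε j) (2 * MM ν (2 * k + 1) ε + MM ν (2 * k + 2) ε) := by
    have := ((hasSum_M hν hε (2 * k + 1)).mul_left 2).add (hasSum_M hν hε (2 * k + 2))
    refine (hasSum_congr_fun fun j => ?_).mpr this
    ring
  have hL := hst.sub hG
  have hR := hs.sub hG
  have h1 := hasSum_le (fun j => ?_) ((hasSum_M hν hε (2 * k + 2)).mul_left (min 1 ν)) hL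
  · have hU : HasSum (fun j => (A1 * 2 + A2) * ε * (tt ε j ^ (2 * k) + ε ^ k
        + tt ε j ^ (2 * k + 2)) * pr ν ε j)
        ((A1 * 2 + A2) * ε * (MM ν (2 * k) ε + ε ^ k + MM ν (2 * k + 2) ε)) := by
      have h0 := (hasSum_M hν hε 0).mul_left (ε ^ k)
      rw [M_zero hν hε] at h0
      have := ((((hasSum_M hν hε (2 * k)).add h0).add (hasSum_M hν hε (2 * k + 2))).mul_left
        ((A1 * 2 + A2) * ε))
      rw [mul_one (ε ^ k)] at this
      refine (hasSum_congr_fun fun j => ?_).mpr this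
      ring
    have h2 := hasSum_le (fun j => ?_) hR hU
    · rw [mul_comm 2 A1]
      exact h1.trans h2
    · rw [← sub_mul]
      refine mul_le_mul_of_nonneg_right ?_ (pr_nonneg hν hε j)
      generalize tt ε j = t
      have d1 := pow_diff hε t (2 * k)
      have d2 := pow_diff hε t (2 * k + 1)
      rw [← hA1] at d1
      rw [← hA2] at d2
      have e1 : |t| ^ (2 * k) = t ^ (2 * k) := (even_two_mul k).pow_abs t
      have e2 : |t| ^ (2 * k + 1) ≤ (t ^ (2 * k) + t ^ (2 * k + 2)) / 2 := by
        have : 0 ≤ |t| ^ (2 * k) * (1 - |t|) ^ 2 := by positivity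
        have e3 : |t| ^ (2 * k + 2) = t ^ (2 * k + 2) :=
          (show Even (2 * k + 2) from ⟨k + 1, by ring⟩).pow_abs t
        rw [← e1, ← e3]
        have e4 : |t| ^ (2 * k) * (1 - |t|) ^ 2 =
          |t| ^ (2 * k) - 2 * |t| ^ (2 * k + 1) + |t| ^ (2 * k + 2) := by ring
        linarith
      have e5 : ε ^ (2 * k) ≤ ε ^ k := pow_le_pow_of_le_one hε.le hε1 (by omega)
      have e6 : ε ^ (2 * k + 1) ≤ ε ^ k := pow_le_pow_of_le_one hε.le hε1 (by omega)
      have n1 : 0 ≤ t ^ (2 * k) := (even_two_mul k).pow_nonneg t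
      have n2 : 0 ≤ t ^ (2 * k + 2) := (show Even (2 * k + 2) from ⟨k + 1, by ring⟩).pow_nonneg t
      have n3 : 0 ≤ ε ^ k := by positivity
      have f1 : (t + ε) ^ (2 * k + 1) - t ^ (2 * k + 1) ≤
          ε * (A1 * (t ^ (2 * k) + ε ^ k + t ^ (2 * k + 2))) := by
        refine d1.trans ?_
        refine mul_le_mul_of_nonneg_left (mul_le_mul_of_nonneg_left ?_ hA1p.le) hε.le
        linarith
      have f2 : (t + ε) ^ (2 * k + 2) - t ^ (2 * k + 2) ≤
          ε * (A2 * (t ^ (2 * k) + ε ^ k + t ^ (2 * k + 2))) := by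
        refine d2.trans ?_
        refine mul_le_mul_of_nonneg_left (mul_le_mul_of_nonneg_left ?_ hA2p.le) hε.le
        linarith
      nlinarith
  · rw [← sub_mul, ← mul_assoc]
    refine mul_le_mul_of_nonneg_right ?_ (pr_nonneg hν hε j)
    have ht := tt_ge hε j
    generalize tt ε j = t at *
    have c := coercive hν ht
    have n1 : 0 ≤ t ^ (2 * k) := (even_two_mul k).pow_nonneg t
    have := mul_le_mul_of_nonneg_left c n1
    calc _ = t ^ (2 * k) * (min 1 ν * t ^ 2) := by ring
      _ ≤ _ := this
      _ = _ := by ring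

lemma M_even_nonneg (hν : 0 < ν) (hε : 0 < ε) (k : ℕ) : 0 ≤ MM ν (2 * k) ε :=
  (hasSum_M hν hε (2 * k)).nonneg
    fun j => mul_nonneg ((even_two_mul k).pow_nonneg _) (pr_nonneg hν hε j)

lemma moment_bound (hν : 0 < ν) (k : ℕ) :
    ∃ C : ℝ, ∀ᶠ ε in 𝓝[>] (0 : ℝ), MM ν (2 * k) ε ≤ C * ε ^ k := by
  induction k with
  | zero =>
    refine ⟨1, ?_⟩
    filter_upwards [self_mem_nhdsWithin] with ε hε
    simp [M_zero hν hε]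
  | succ k ih =>
    obtain ⟨C, hC⟩ := ih
    obtain ⟨A, hA, h⟩ := moment_step hν k
    have hc : 0 < min 1 ν := lt_min one_pos hν
    set c := min 1 ν
    refine ⟨2 * A * (C + 1) / c, ?_⟩
    have hev : ∀ᶠ ε in 𝓝[>] (0 : ℝ), ε < min 1 (c / (2 * A)) :=
      mem_nhdsWithin_of_mem_nhds (Iio_mem_nhds (by positivity))
    filter_upwards [self_mem_nhdsWithin, hC, hev] with ε hε h1 h2
    replace hε : 0 < ε := hε
    have h3 := h ε hε (h2.trans_le (min_le_left _ _)).le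
    have h4 : ε < c / (2 * A) := h2.trans_le (min_le_right _ _)
    rw [lt_div_iff₀ (by positivity)] at h4
    have h5 := M_even_nonneg hν hε (k + 1)
    rw [show 2 * (k + 1) = 2 * k + 2 by ring] at h5 ⊢
    rw [div_mul_eq_mul_div, le_div_iff₀ hc]
    have h6 : A * ε * (MM ν (2 * k) ε + ε ^ k) ≤ A * ε * ((C + 1) * ε ^ k) := by
      gcongr
      linarith
    have h7 : ε ^ (k + 1) = ε * ε ^ k := by ring
    rw [h7]
    nlinarith

lemma M_isBigO (hν : 0 < ν) (k : ℕ) :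
    (MM ν (2 * k)) =O[𝓝[>] (0 : ℝ)] (fun ε => ε ^ k) := by
  obtain ⟨C, hC⟩ := moment_bound hν k
  refine IsBigO.of_bound C ?_
  filter_upwards [self_mem_nhdsWithin, hC] with ε hε h
  replace hε : 0 < ε := hε
  rw [Real.norm_of_nonneg (M_even_nonneg hν hε k), Real.norm_of_nonneg (by positivity)]
  exact h

lemma taylor (ν : ℝ) (n K : ℕ) (hK : K ≤ 8) (hn8 : 8 ≤ n) (hn : ν ≤ 2 * n) (hν : 0 < ν) :
    ∃ C : ℝ, 0 ≤ C ∧ ∀ t : ℝ, -1 ≤ t →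
      |(1 + t) ^ ν - ∑ i ∈ range K, Ring.choose ν i * t ^ i| ≤
        C * (|t| ^ K * (1 + t ^ (2 * n))) := by
  have h := (Real.one_add_rpow_hasFPowerSeriesAt_zero (a := ν)).isBigO_sub_partialSum_pow K
  have hps : ∀ y : ℝ, (binomialSeries ℝ ν).partialSum K y =
      ∑ i ∈ range K, Ring.choose ν i * y ^ i := by
    intro y
    unfold FormalMultilinearSeries.partialSum
    refine Finset.sum_congr rfl fun i _ => ?_
    rw [binomialSeries_apply]
    simp
  simp only [hps, zero_add] at h
  obtain ⟨C1, hC1, h⟩ := h.exists_pos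
  rw [isBigOWith_iff, Metric.eventually_nhds_iff] at h
  obtain ⟨δ, hδ, h⟩ := h
  set C2 : ℝ := 2 ^ (2 * n) + ∑ i ∈ range K, |Ring.choose ν i| with hC2
  have hC2p : 0 ≤ C2 := by positivity
  refine ⟨C1 + C2 * (1 / δ) ^ K, by positivity, fun t ht => ?_⟩
  have hev : 0 ≤ t ^ (2 * n) := (even_two_mul n).pow_nonneg t
  rcases lt_or_ge |t| δ with h' | h'
  · have := h (y := t) (by simpa [Real.dist_eq] using h')
    rw [Real.norm_eq_abs, norm_pow, norm_norm, Real.norm_eq_abs] at this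
    refine this.trans ?_
    calc C1 * |t| ^ K = C1 * (|t| ^ K * 1) := by ring
      _ ≤ (C1 + C2 * (1 / δ) ^ K) * (|t| ^ K * (1 + t ^ (2 * n))) := by
        have : 0 ≤ C2 * (1 / δ) ^ K := by positivity
        gcongr
        · linarith
        · linarith
  · have habs : |t| ^ (2 * n) = t ^ (2 * n) := (even_two_mul n).pow_abs t
    have hpow : ∀ i, i ≤ 2 * n → |t| ^ i ≤ 1 + t ^ (2 * n) := by
      intro i hi
      rw [← habs]
      rcases le_total |t| 1 with h1 | h1
      · have := pow_le_one₀ (n := i) (abs_nonneg t) h1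
        have : 0 ≤ |t| ^ (2 * n) := by positivity
        linarith
      · have := pow_le_pow_right₀ h1 hi
        linarith
    have hA : (1 + t) ^ ν ≤ 2 ^ (2 * n) * (1 + t ^ (2 * n)) := by
      have ha : (1 + t) ^ ν ≤ (1 + |t|) ^ ν :=
        Real.rpow_le_rpow (by linarith) (by linarith [le_abs_self t]) hν.le
      have hb : (1 + |t|) ^ ν ≤ (1 + |t|) ^ ((2 * n : ℕ) : ℝ) :=
        Real.rpow_le_rpow_of_exponent_le (by linarith [abs_nonneg t]) (by push_cast; exact hn)
      rw [Real.rpow_natCast] at hb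
      have hc := add_pow_le zero_le_one (abs_nonneg t) (2 * n)
      rw [one_pow, habs] at hc
      have hd : (2 : ℝ) ^ (2 * n - 1) ≤ 2 ^ (2 * n) :=
        pow_le_pow_right₀ (by norm_num) (by omega)
      have he := mul_le_mul_of_nonneg_right hd (show 0 ≤ 1 + t ^ (2 * n) by linarith)
      linarith
    have hB : |∑ i ∈ range K, Ring.choose ν i * t ^ i| ≤
        (∑ i ∈ range K, |Ring.choose ν i|) * (1 + t ^ (2 * n)) := by
      refine (Finset.abs_sum_le_sum_abs _ _).trans ?_
      rw [Finset.sum_mul]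
      refine Finset.sum_le_sum fun i hi => ?_
      rw [abs_mul, abs_pow]
      have := Finset.mem_range.1 hi
      exact mul_le_mul_of_nonneg_left (hpow i (by omega)) (abs_nonneg _)
    have hC : |(1 + t) ^ ν - ∑ i ∈ range K, Ring.choose ν i * t ^ i| ≤
        C2 * (1 + t ^ (2 * n)) := by
      refine (abs_sub _ _).trans ?_
      rw [abs_of_nonneg (Real.rpow_nonneg (by linarith : 0 ≤ 1 + t) ν), hC2, add_mul]
      exact add_le_add hA hB
    have hD : 1 ≤ (1 / δ) ^ K * |t| ^ K := by
      rw [← mul_pow]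
      refine one_le_pow₀ ?_
      rw [one_div_mul_eq_div, le_div_iff₀ hδ]
      linarith
    refine hC.trans ?_
    have hE : 0 ≤ C2 * (1 + t ^ (2 * n)) := by positivity
    have hF := mul_le_mul_of_nonneg_left hD hE
    have hG : 0 ≤ C1 * (|t| ^ K * (1 + t ^ (2 * n))) := by positivity
    nlinarith

lemma relation (hν : 0 < ν) (k : ℕ) (hk : k ≤ 8) :
    (fun ε => (∑ i ∈ range (k + 1), MM ν i ε * (ε ^ (k - i) * (k.choose i))) -
      ∑ i ∈ range (8 - k), Ring.choose ν i * MM ν (k + i) ε) =O[𝓝[>] (0 : ℝ)]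
      (fun ε => ε ^ 4) := by
  obtain ⟨n0, hn0⟩ := exists_nat_ge ν
  set n := max n0 8 with hn
  have hn8 : 8 ≤ n := le_max_right _ _
  have hnν : ν ≤ 2 * n := by
    have : (n0 : ℝ) ≤ n := by exact_mod_cast le_max_left _ _
    have : (0 : ℝ) ≤ n := by positivity
    linarith
  obtain ⟨C, hC, hT⟩ := taylor ν n (8 - k) (by omega) hn8 hnν hν
  have hB : (fun ε => C * (MM ν (2 * 4) ε + MM ν (2 * (4 + n)) ε)) =O[𝓝[>] (0 : ℝ)]
      (fun ε => ε ^ 4) := by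
    refine ((M_isBigO hν 4).add ((M_isBigO hν (4 + n)).trans ?_)).const_mul_left C
    refine IsBigO.of_bound 1 ?_
    have hev : ∀ᶠ ε in 𝓝[>] (0 : ℝ), ε < 1 :=
      mem_nhdsWithin_of_mem_nhds (Iio_mem_nhds one_pos)
    filter_upwards [self_mem_nhdsWithin, hev] with ε hε h1
    replace hε : 0 < ε := hε
    rw [one_mul, Real.norm_of_nonneg (by positivity), Real.norm_of_nonneg (by positivity)]
    exact pow_le_pow_of_le_one hε.le h1.le (by omega)
  refine IsBigO.trans (IsBigO.of_bound 1 ?_) hB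
  filter_upwards [self_mem_nhdsWithin] with ε hε
  replace hε : 0 < ε := hε
  have h1 := stein hν hε (fun t => t ^ k) _ (hasSum_shift hν hε k)
  have h2 := hasSum_sum (s := range (8 - k)) (fun i _ =>
    (hasSum_M hν hε (k + i)).mul_left (Ring.choose ν i))
  have h3 := h1.sub h2
  have h4 := ((hasSum_M hν hε (2 * 4)).add (hasSum_M hν hε (2 * (4 + n)))).mul_left C
  have hpt : ∀ j, |(1 + tt ε j) ^ ν * tt ε j ^ k * pr ν ε j -
      ∑ i ∈ range (8 - k), Ring.choose ν i * (tt ε j ^ (k + i) * pr ν ε j)| ≤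
      C * (tt ε j ^ (2 * 4) * pr ν ε j + tt ε j ^ (2 * (4 + n)) * pr ν ε j) := by
    intro j
    have h5 := hT (tt ε j) (tt_ge hε j)
    have hp := pr_nonneg hν hε j
    generalize tt ε j = t at *
    have e1 : (1 + t) ^ ν * t ^ k * pr ν ε j -
      ∑ i ∈ range (8 - k), Ring.choose ν i * (t ^ (k + i) * pr ν ε j) =
      ((1 + t) ^ ν - ∑ i ∈ range (8 - k), Ring.choose ν i * t ^ i) * (t ^ k * pr ν ε j) := by
      rw [sub_mul, Finset.sum_mul, mul_assoc]
      congr 1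
      refine Finset.sum_congr rfl fun i _ => ?_
      ring
    rw [e1, abs_mul, abs_mul, abs_pow, abs_of_nonneg hp]
    have e2 : |t| ^ 8 = t ^ 8 := (show Even 8 by decide).pow_abs t
    have e3 : |t| ^ (8 - k) * |t| ^ k = t ^ 8 := by rw [← pow_add, Nat.sub_add_cancel hk, e2]
    calc _ ≤ C * (|t| ^ (8 - k) * (1 + t ^ (2 * n))) * (|t| ^ k * pr ν ε j) := by gcongr
      _ = C * ((|t| ^ (8 - k) * |t| ^ k) * (1 + t ^ (2 * n)) * pr ν ε j) := by ring
      _ = _ := by rw [e3]; ring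
  rw [one_mul, Real.norm_eq_abs, Real.norm_eq_abs]
  refine le_trans ?_ (le_abs_self _)
  rw [abs_le]
  constructor
  · rw [← sub_nonneg, sub_neg_eq_add]
    refine (h3.add h4).nonneg fun j => ?_
    have := (abs_le.1 (hpt j)).1
    linarith
  · exact hasSum_le (fun j => (abs_le.1 (hpt j)).2) h3 h4

noncomputable def PP (ν : ℝ) : ℕ → ℝ → ℝ
  | 0, _ => 1
  | 1, ε => ((1/2) * ν ^ 0 + (-1/2) * ν ^ 1) / ν ^ 1 * ε ^ 1
      + ((1/24) * ν ^ 0 + (-1/24) * ν ^ 2) / ν ^ 2 * ε ^ 2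
      + ((1/24) * ν ^ 0 + (-1/24) * ν ^ 2) / ν ^ 3 * ε ^ 3
  | 2, ε => ((1) * ν ^ 0) / ν ^ 1 * ε ^ 1
      + ((1/4) * ν ^ 0 + (-1/2) * ν ^ 1 + (1/4) * ν ^ 2) / ν ^ 2 * ε ^ 2
      + ((-1/24) * ν ^ 0 + (1/24) * ν ^ 2) / ν ^ 2 * ε ^ 3
  | 3, ε => ((5/2) * ν ^ 0 + (-3/2) * ν ^ 1) / ν ^ 2 * ε ^ 2
      + ((1/4) * ν ^ 0 + (-3/8) * ν ^ 1 + (1/4) * ν ^ 2 + (-1/8) * ν ^ 3) / ν ^ 3 * ε ^ 3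
  | 4, ε => ((3) * ν ^ 0) / ν ^ 2 * ε ^ 2
      + ((9/2) * ν ^ 0 + (-5) * ν ^ 1 + (3/2) * ν ^ 2) / ν ^ 3 * ε ^ 3
  | 5, ε => ((35/2) * ν ^ 0 + (-15/2) * ν ^ 1) / ν ^ 3 * ε ^ 3
  | 6, ε => ((15) * ν ^ 0) / ν ^ 3 * ε ^ 3
  | _, _ => 0

noncomputable def QQ (ν : ℝ) : ℕ → ℝ → ℝ
  | 2, ε => ((1/12) * ν ^ 0 + (-1/12) * ν ^ 2) / ν ^ 3 * ε ^ 0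
  | 3, ε => ((1/8) * ν ^ 0 + (-1/8) * ν ^ 2) / ν ^ 3 * ε ^ 1
  | 4, ε => ((1) * ν ^ 0) / ν ^ 3 * ε ^ 0
      + ((-1/12) * ν ^ 0 + (1/12) * ν ^ 2) / ν ^ 2 * ε ^ 1
      + ((1/6) * ν ^ 0 + (-1/6) * ν ^ 2) / ν ^ 3 * ε ^ 2
  | 5, ε => ((45/2) * ν ^ 0 + (5/2) * ν ^ 2) / ν ^ 3 * ε ^ 0
      + ((5/2) * ν ^ 0 + (-5/4) * ν ^ 1 + (-1/4) * ν ^ 3) / ν ^ 3 * ε ^ 1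
      + ((-5/24) * ν ^ 0 + (5/24) * ν ^ 2) / ν ^ 2 * ε ^ 2
      + ((5/24) * ν ^ 0 + (-5/24) * ν ^ 2) / ν ^ 3 * ε ^ 3
  | 6, ε => ((105) * ν ^ 0) / ν ^ 3 * ε ^ 0
      + ((135/2) * ν ^ 0 + (-25) * ν ^ 1 + (15/2) * ν ^ 2) / ν ^ 3 * ε ^ 1
      + ((5) * ν ^ 0 + (-15/4) * ν ^ 1 + (1/2) * ν ^ 2 + (-3/4) * ν ^ 3) / ν ^ 3 * ε ^ 2
      + ((-3/8) * ν ^ 0 + (3/8) * ν ^ 2) / ν ^ 2 * ε ^ 3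
      + ((1/4) * ν ^ 0 + (-1/4) * ν ^ 2) / ν ^ 3 * ε ^ 4
  | _, _ => 0

lemma choose_rec (a : ℝ) (n : ℕ) :
    Ring.choose a (n + 1) = Ring.choose a n * (a - n) / (n + 1) := by
  rw [Ring.choose_eq_smul, Ring.choose_eq_smul, descPochhammer_succ_right,
    Polynomial.smeval_mul, Polynomial.smeval_sub, Polynomial.smeval_X, pow_one,
    Polynomial.smeval_natCast, Nat.factorial_succ]
  have h1 : (n.factorial : ℝ) ≠ 0 := by exact_mod_cast Nat.factorial_ne_zero n
  have h2 : (n : ℝ) + 1 ≠ 0 := by positivity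
  simp only [smul_eq_mul, pow_zero, nsmul_eq_mul, mul_one]
  push_cast
  field_simp

lemma choose_zero' (a : ℝ) : Ring.choose a 0 = 1 := Ring.choose_zero_right a

lemma improve (b : ℕ → ℝ) (hb0 : b 0 = 1) (hb1 : b 1 ≠ 0) (d : ℕ → ℝ → ℝ)
    (hrel : ∀ k ≤ 6, (fun ε => (∑ i ∈ range (k + 1), d i ε * (ε ^ (k - i) * (k.choose i))) -
      ∑ i ∈ range (8 - k), b i * d (k + i) ε) =O[𝓝[>] (0 : ℝ)] (fun ε => ε ^ 4))
    (h0 : d 0 =ᶠ[𝓝[>] (0 : ℝ)] 0)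
    (m : ℕ) (hm : m ≤ 3)
    (hd : ∀ k ≤ 7, d k =O[𝓝[>] (0 : ℝ)] (fun ε => ε ^ m)) :
    ∀ k ≤ 7, d k =O[𝓝[>] (0 : ℝ)] (fun ε => ε ^ (m + 1)) := by
  have hpow : ∀ p q : ℕ, q ≤ p →
      (fun ε : ℝ => ε ^ p) =O[𝓝[>] (0 : ℝ)] (fun ε => ε ^ q) := by
    intro p q hpq
    refine IsBigO.of_bound 1 ?_
    have hev : ∀ᶠ ε in 𝓝[>] (0 : ℝ), ε < 1 :=
      mem_nhdsWithin_of_mem_nhds (Iio_mem_nhds one_pos)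
    filter_upwards [self_mem_nhdsWithin, hev] with ε hε h1
    replace hε : 0 < ε := hε
    rw [one_mul, Real.norm_of_nonneg (by positivity), Real.norm_of_nonneg (by positivity)]
    exact pow_le_pow_of_le_one hε.le h1.le hpq
  have main : ∀ s k : ℕ, k + s = 6 → ∀ k', k < k' → k' ≤ 7 →
      d k' =O[𝓝[>] (0 : ℝ)] (fun ε => ε ^ (m + 1)) := by
    intro s
    induction s using Nat.strong_induction_on with
    | _ s ih =>
    intro k hks k' hk' hk'7
    rcases Nat.lt_or_ge (k + 1) k' with hlt | hge
    · exact ih (s - 1) (by omega) (k + 1) (by omega) k' hlt hk'7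
    obtain rfl : k' = k + 1 := by omega
    have hr := (hrel k (by omega)).trans (hpow 4 (m + 1) (by omega))
    have hA : (fun ε => ∑ i ∈ range k, d i ε * (ε ^ (k - i) * (k.choose i)))
        =O[𝓝[>] (0 : ℝ)] (fun ε => ε ^ (m + 1)) := by
      refine IsBigO.fun_sum fun i hi => ?_
      have hi' := Finset.mem_range.1 hi
      have h1 : (fun ε : ℝ => ε ^ (k - i) * (k.choose i : ℝ)) =O[𝓝[>] (0 : ℝ)]
          (fun ε => ε ^ 1) := by
        simp_rw [mul_comm _ (k.choose i : ℝ)]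
        exact (hpow _ _ (by omega)).const_mul_left _
      refine ((hd i (by omega)).mul h1).congr_right fun ε => ?_
      ring
    have hB : (fun ε => ∑ i ∈ range (6 - k), b (i + 2) * d (k + (i + 2)) ε)
        =O[𝓝[>] (0 : ℝ)] (fun ε => ε ^ (m + 1)) := by
      refine IsBigO.fun_sum fun i hi => ?_
      have hi' := Finset.mem_range.1 hi
      exact (ih (s - 1) (by omega) (k + 1) (by omega) _ (by omega) (by omega)).const_mul_left _
    have hC := ((hA.sub hB).sub hr).const_mul_left (b 1)⁻¹
    refine hC.congr_left fun ε => ?_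
    rw [show 8 - k = (6 - k) + 1 + 1 by omega, Finset.sum_range_succ' _ (6 - k + 1),
      Finset.sum_range_succ' _ (6 - k), Finset.sum_range_succ _ k, hb0]
    simp only [zero_add, add_assoc, Nat.reduceAdd, add_zero, Nat.sub_self, pow_zero, Nat.choose_self,
      Nat.cast_one, mul_one, one_mul]
    field_simp
    ring
  intro k hk
  rcases Nat.eq_zero_or_pos k with rfl | hk0
  · exact h0.trans_isBigO (isBigO_zero _ _)
  · exact main 6 0 (by omega) k hk0 hk

lemma M_O1 (hν : 0 < ν) (k : ℕ) : MM ν k =O[𝓝[>] (0 : ℝ)] (fun ε => ε ^ 0) := by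
  have h : (fun ε => MM ν (2 * 0) ε + MM ν (2 * k) ε) =O[𝓝[>] (0 : ℝ)] (fun ε => ε ^ 0) := by
    refine (M_isBigO hν 0).add ((M_isBigO hν k).trans ?_)
    simp only [pow_zero]
    have : Tendsto (fun ε : ℝ => ε ^ k) (𝓝[>] 0) (𝓝 (0 ^ k)) :=
      ((continuous_pow k).tendsto 0).mono_left nhdsWithin_le_nhds
    exact this.isBigO_one ℝ
  refine IsBigO.trans (IsBigO.of_bound 1 ?_) h
  filter_upwards [self_mem_nhdsWithin] with ε hε
  replace hε : 0 < ε := hε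
  rw [one_mul, Real.norm_eq_abs, Real.norm_eq_abs]
  refine le_trans ?_ (le_abs_self _)
  have h3 := hasSum_M hν hε k
  have h4 := (hasSum_M hν hε (2 * 0)).add (hasSum_M hν hε (2 * k))
  have hpt : ∀ j, |tt ε j ^ k * pr ν ε j| ≤
      tt ε j ^ (2 * 0) * pr ν ε j + tt ε j ^ (2 * k) * pr ν ε j := by
    intro j
    have hp := pr_nonneg hν hε j
    rw [abs_mul, abs_of_nonneg hp, ← add_mul]
    refine mul_le_mul_of_nonneg_right ?_ hp
    rw [mul_zero, pow_zero, mul_comm 2 k, pow_mul, abs_le]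
    constructor <;> nlinarith [sq_nonneg (tt ε j ^ k - 1), sq_nonneg (tt ε j ^ k + 1)]
  rw [abs_le]
  constructor
  · rw [← sub_nonneg, sub_neg_eq_add]
    refine (h3.add h4).nonneg fun j => ?_
    have := (abs_le.1 (hpt j)).1
    linarith
  · exact hasSum_le (fun j => (abs_le.1 (hpt j)).2) h3 h4

lemma PQ (hν : 0 < ν) (k : ℕ) (hk : k ≤ 6) (ε : ℝ) :
    (∑ i ∈ range (k + 1), PP ν i ε * (ε ^ (k - i) * (k.choose i))) -
      ∑ i ∈ range (8 - k), Ring.choose ν i * PP ν (k + i) ε = ε ^ 4 * QQ ν k ε := by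
  have hc1 : Ring.choose ν 1 = ν := by simp
  have hc2 : Ring.choose ν 2 = ν * (ν - 1) / 2 := by
    rw [choose_rec ν 1, hc1]; norm_num
  have hc3 : Ring.choose ν 3 = ν * (ν - 1) * (ν - 2) / 6 := by
    rw [choose_rec ν 2, hc2]; push_cast; ring
  have hc4 : Ring.choose ν 4 = ν * (ν - 1) * (ν - 2) * (ν - 3) / 24 := by
    rw [choose_rec ν 3, hc3]; push_cast; ring
  have hc5 : Ring.choose ν 5 = ν * (ν - 1) * (ν - 2) * (ν - 3) * (ν - 4) / 120 := by
    rw [choose_rec ν 4, hc4]; push_cast; ring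
  have hc6 : Ring.choose ν 6 = ν * (ν - 1) * (ν - 2) * (ν - 3) * (ν - 4) * (ν - 5) / 720 := by
    rw [choose_rec ν 5, hc5]; push_cast; ring
  have k2 : Nat.choose 4 2 = 6 := rfl
  have k3 : Nat.choose 5 2 = 10 := rfl
  have k4 : Nat.choose 5 3 = 10 := rfl
  have k5 : Nat.choose 6 2 = 15 := rfl
  have k6 : Nat.choose 6 3 = 20 := rfl
  have k7 : Nat.choose 6 4 = 15 := rfl
  have k8 : Nat.choose 3 2 = 3 := rfl
  have k9 : Nat.choose 4 3 = 4 := rfl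
  have k10 : Nat.choose 5 4 = 5 := rfl
  have k11 : Nat.choose 6 5 = 6 := rfl
  have hν' := hν.ne'
  interval_cases k <;>
  · simp only [Finset.sum_range_succ, Finset.sum_range_zero, Nat.reduceAdd, Nat.reduceSub,
      PP, QQ, Ring.choose_zero_right, hc1, hc2, hc3, hc4, hc5, hc6, k2, k3, k4, k5, k6, k7, k8,
      k9, k10, k11, Nat.choose_zero_right, Nat.choose_one_right, Nat.choose_self]
    push_cast
    field_simp
    ring

lemma PP_cont (ν : ℝ) (k : ℕ) : Continuous (PP ν k) := by
  rcases k with _ | _ | _ | _ | _ | _ | _ | k <;> unfold PP <;> fun_prop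

lemma QQ_cont (ν : ℝ) (k : ℕ) : Continuous (QQ ν k) := by
  rcases k with _ | _ | _ | _ | _ | _ | _ | k <;> unfold QQ <;> fun_prop

lemma cont_O1 {f : ℝ → ℝ} (hf : Continuous f) : f =O[𝓝[>] (0 : ℝ)] (fun ε => ε ^ 0) := by
  simp only [pow_zero]
  exact ((hf.tendsto 0).mono_left nhdsWithin_le_nhds).isBigO_one ℝ

lemma M1_expansion (hν : 0 < ν) :
    (fun ε => MM ν 1 ε - PP ν 1 ε) =O[𝓝[>] (0 : ℝ)] (fun ε => ε ^ 4) := by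
  have hrel : ∀ k ≤ 6, (fun ε => (∑ i ∈ range (k + 1),
      (MM ν i ε - PP ν i ε) * (ε ^ (k - i) * (k.choose i))) -
      ∑ i ∈ range (8 - k), Ring.choose ν i * (MM ν (k + i) ε - PP ν (k + i) ε))
      =O[𝓝[>] (0 : ℝ)] (fun ε => ε ^ 4) := by
    intro k hk
    have hQ : (fun ε => ε ^ 4 * QQ ν k ε) =O[𝓝[>] (0 : ℝ)] (fun ε => ε ^ 4) := by
      have := (isBigO_refl (fun ε : ℝ => ε ^ 4) (𝓝[>] 0)).mul (cont_O1 (QQ_cont ν k))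
      simpa using this
    refine ((relation hν k (by omega)).sub hQ).congr_left fun ε => ?_
    rw [← PQ hν k hk ε]
    simp only [sub_mul, mul_sub, Finset.sum_sub_distrib]
    ring
  have h0 : (fun ε => MM ν 0 ε - PP ν 0 ε) =ᶠ[𝓝[>] (0 : ℝ)] 0 := by
    filter_upwards [self_mem_nhdsWithin] with ε hε
    simp [M_zero hν hε, PP]
  have imp := improve (fun i => Ring.choose ν i) (by simp) (by simpa using hν.ne')
    (fun k ε => MM ν k ε - PP ν k ε) hrel h0
  have s0 : ∀ k ≤ 7, (fun ε => MM ν k ε - PP ν k ε) =O[𝓝[>] (0 : ℝ)] (fun ε => ε ^ 0) :=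
    fun k _ => (M_O1 hν k).sub (cont_O1 (PP_cont ν k))
  exact imp 3 (by norm_num) (imp 2 (by norm_num) (imp 1 (by norm_num) (imp 0 (by norm_num) s0)))
    1 (by norm_num)

lemma mean_eq (hν : 0 < ν) (hε : 0 < ε) :
    cmpMean (ε ^ (-ν)) ν = (MM ν 1 ε + 1) / ε := by
  have h1 := hasSum_M hν hε 1
  have h0 := hasSum_M hν hε 0
  rw [M_zero hν hε] at h0
  have h := ((h1.add h0).mul_left ε⁻¹).tsum_eq
  unfold cmpMean cmpZ
  rw [← tsum_div_const, div_eq_inv_mul, ← h]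
  refine tsum_congr fun j => ?_
  unfold pr tt wt
  field_simp
  ring

end CMPAux

/-- Asymptotics of the mean of the `CMP(λ,ν)` distribution:
`E X = λ^{1/ν} − (ν−1)/(2ν) − ((ν²−1)/(24ν²)) λ^{−1/ν} − ((ν²−1)/(24ν³)) λ^{−2/ν}
  + O(λ^{−3/ν})` as `λ → ∞`. -/
theorem cmpMean_asymptotic (ν : ℝ) (hν : 0 < ν) :
    ∃ C > (0 : ℝ), ∃ Λ > (0 : ℝ), ∀ lam : ℝ, lam ≥ Λ →
      |cmpMean lam ν - lam ^ (1 / ν) + (ν - 1) / (2 * ν) +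
          ((ν ^ 2 - 1) / (24 * ν ^ 2)) * lam ^ (-(1 / ν)) +
          ((ν ^ 2 - 1) / (24 * ν ^ 3)) * lam ^ (-(2 / ν))|
        ≤ C * lam ^ (-(3 / ν)) := by
  have h := CMPAux.M1_expansion hν
  obtain ⟨C, hC, h⟩ := h.exists_pos
  rw [Asymptotics.isBigOWith_iff, eventually_nhdsWithin_iff, Metric.eventually_nhds_iff] at h
  obtain ⟨δ, hδ, h⟩ := h
  have hten : Filter.Tendsto (fun lam : ℝ => lam ^ (-(1 / ν))) Filter.atTop (nhds 0) :=
    tendsto_rpow_neg_atTop (by positivity)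
  obtain ⟨L, hL⟩ := Filter.eventually_atTop.1 (hten.eventually (Iio_mem_nhds hδ))
  refine ⟨C, hC, max L 1, by positivity, fun lam hlam => ?_⟩
  have hl0 : 0 < lam := lt_of_lt_of_le one_pos ((le_max_right L 1).trans hlam)
  have hlδ := hL lam ((le_max_left L 1).trans hlam)
  set ε := lam ^ (-(1 / ν)) with hεd
  have hε : 0 < ε := by positivity
  have e0 : lam = ε ^ (-ν) := by
    rw [hεd, ← Real.rpow_mul hl0.le, show -(1 / ν) * -ν = 1 by field_simp, Real.rpow_one]
  have e1 : lam ^ (1 / ν) = ε⁻¹ := by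
    rw [hεd, Real.rpow_neg hl0.le, inv_inv]
  have e2 : lam ^ (-(2 / ν)) = ε ^ 2 := by
    rw [hεd, ← Real.rpow_natCast, ← Real.rpow_mul hl0.le]
    congr 1; push_cast; ring
  have e3 : lam ^ (-(3 / ν)) = ε ^ 3 := by
    rw [hεd, ← Real.rpow_natCast, ← Real.rpow_mul hl0.le]
    congr 1; push_cast; ring
  have hm : cmpMean lam ν = (CMPAux.MM ν 1 ε + 1) / ε := by
    rw [← CMPAux.mean_eq hν hε, ← e0]
  have hb := h (y := ε) (by rw [Real.dist_eq, sub_zero, abs_of_pos hε]; exact hlδ) hε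
  rw [Real.norm_eq_abs, Real.norm_of_nonneg (by positivity)] at hb
  rw [hm, e1, e2, e3]
  have key : (CMPAux.MM ν 1 ε + 1) / ε - ε⁻¹ + (ν - 1) / (2 * ν) +
          ((ν ^ 2 - 1) / (24 * ν ^ 2)) * ε + ((ν ^ 2 - 1) / (24 * ν ^ 3)) * ε ^ 2 =
      (CMPAux.MM ν 1 ε - CMPAux.PP ν 1 ε) / ε := by
    have hν0 := hν.ne'
    simp only [CMPAux.PP]
    field_simp
    ring
  rw [key, abs_div, abs_of_pos hε, div_le_iff₀ hε]
  refine hb.trans_eq ?_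
  ring
end
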